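/- arXiv:1611.06756 — 11 statements merged into one kernel-verified Lean document; each statement's English description precedes it below -/
import Mathlib

section
/- For every nonzero vector v in V, the number of 2-dimensional totally isotropic subspaces of V containing v is exactly p+1. -/
open Module

lemma aux_pair {k V : Type*} [Field k] [AddCommGroup V] [Module k V] (U : Submodule k V) (v : V)
    (hv : v ≠ 0) (hd : Disjoint (Submodule.span k {v}) U) (u : V) (hu : u ∈ U) (hu0 : u ≠ 0) :
    finrank k (Submodule.span k {v, u}) = 2 := by
  have h : LinearIndependent k ![v, u] := by
    rw [LinearIndependent.pair_iff' hv]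
    intro a ha
    apply hu0
    rw [Submodule.disjoint_def] at hd
    exact hd u (Submodule.mem_span_singleton.2 ⟨a, ha⟩) hu
  have := finrank_span_eq_card h
  rw [Matrix.range_cons_cons_empty] at this
  simpa using this

/-- For every nonzero vector `v` in a 4-dimensional symplectic space over `F_p`,
the number of 2-dimensional totally isotropic subspaces containing `v` is `p+1`. -/
theorem stmt_1 (p : ℕ) [Fact p.Prime] (V : Type*) [AddCommGroup V]
    [Module (ZMod p) V] [FiniteDimensional (ZMod p) V]
    (hV : finrank (ZMod p) V = 4)
    (B : V →ₗ[ZMod p] V →ₗ[ZMod p] ZMod p)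
    (halt : ∀ x : V, B x x = 0)
    (hnd : ∀ x : V, (∀ y : V, B x y = 0) → x = 0)
    (v : V) (hv : v ≠ 0) :
    Nat.card {L : Submodule (ZMod p) V //
      v ∈ L ∧ finrank (ZMod p) L = 2 ∧ ∀ x ∈ L, ∀ y ∈ L, B x y = 0} = p + 1 := by
  have hBv : B v ≠ 0 := fun h => hv (hnd v fun y => by simp [h])
  have hsk : ∀ x y, B x y = - B y x := by
    intro x y
    have := halt (x + y)
    simp only [map_add, LinearMap.add_apply, halt] at this
    linear_combination this
  have hK : finrank (ZMod p) (LinearMap.ker (B v)) = 3 := by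
    have h1 := LinearMap.finrank_range_add_finrank_ker (B v)
    have h2 : LinearMap.range (B v) = ⊤ := LinearMap.range_eq_top.2 (LinearMap.surjective hBv)
    rw [h2, finrank_top, finrank_self] at h1
    omega
  obtain ⟨U, hd, hs⟩ : ∃ U : Submodule (ZMod p) V, Disjoint (Submodule.span (ZMod p) {v}) U ∧
      Submodule.span (ZMod p) {v} ⊔ U = LinearMap.ker (B v) := by
    obtain ⟨q, hq⟩ := Submodule.exists_isCompl (Submodule.span (ZMod p) {v})
    refine ⟨q ⊓ LinearMap.ker (B v), hq.disjoint.mono_right inf_le_left, ?_⟩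
    rw [← sup_inf_assoc_of_le, hq.sup_eq_top, top_inf_eq]
    simp [Submodule.span_singleton_le_iff_mem, halt]
  have hU : finrank (ZMod p) U = 2 := by
    have h1 := Submodule.finrank_sup_add_finrank_inf_eq (Submodule.span (ZMod p) {v}) U
    rw [hs, hd.eq_bot, finrank_bot, finrank_span_singleton hv] at h1
    omega
  have hUB : ∀ u ∈ U, B v u = 0 := fun u hu =>
    LinearMap.mem_ker.1 (hs ▸ (le_sup_right : U ≤ Submodule.span (ZMod p) {v} ⊔ U) hu)
  have hd' := Submodule.disjoint_def.1 hd
  have hcard : Nat.card (Projectivization (ZMod p) U) = p + 1 := by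
    rw [Projectivization.card_of_finrank_two _ _ hU, Nat.card_zmod]
  rw [← hcard]
  symm
  refine Nat.card_congr (Equiv.ofBijective (fun P => ⟨Submodule.span (ZMod p) {v, (P.rep : V)},
    ?_, ?_, ?_⟩) ⟨?_, ?_⟩)
  · exact Submodule.subset_span (by simp)
  · exact aux_pair U v hv hd _ P.rep.2 (by simpa using P.rep_nonzero)
  · intro x hx y hy
    obtain ⟨a, b, rfl⟩ := Submodule.mem_span_pair.1 hx
    obtain ⟨c, d, rfl⟩ := Submodule.mem_span_pair.1 hy
    simp [halt, hUB, hsk (P.rep : V) v]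
  · intro P Q h
    have h1 : (P.rep : V) ∈ Submodule.span (ZMod p) {v, (Q.rep : V)} := by
      have h0 : Submodule.span (ZMod p) {v, (P.rep : V)} =
        Submodule.span (ZMod p) {v, (Q.rep : V)} := Subtype.ext_iff.1 h
      rw [← h0]
      exact Submodule.subset_span (by simp)
    obtain ⟨a, b, hab⟩ := Submodule.mem_span_pair.1 h1
    have h2 : a • v = 0 := by
      apply hd' _ (Submodule.mem_span_singleton.2 ⟨a, rfl⟩)
      rw [eq_sub_of_add_eq hab]
      exact U.sub_mem P.rep.2 (U.smul_mem _ Q.rep.2)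
    rw [h2, zero_add] at hab
    rw [← P.mk_rep, ← Q.mk_rep, Projectivization.mk_eq_mk_iff']
    exact ⟨b, Subtype.ext hab⟩
  · rintro ⟨L, hvL, hL2, hLB⟩
    obtain ⟨w, hwL, hw⟩ : ∃ w ∈ L, w ∉ Submodule.span (ZMod p) {v} := by
      by_contra! hc
      have := Submodule.finrank_mono (R := ZMod p) (s := L) (t := Submodule.span (ZMod p) {v}) hc
      rw [finrank_span_singleton hv] at this
      omega
    have hwK : w ∈ Submodule.span (ZMod p) {v} ⊔ U := hs ▸ LinearMap.mem_ker.2 (hLB v hvL w hwL)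
    obtain ⟨s, hsv, u, hu, rfl⟩ := Submodule.mem_sup.1 hwK
    have hsL : s ∈ L := (Submodule.span_singleton_le_iff_mem _ _).2 hvL hsv
    have huL : u ∈ L := (Submodule.add_mem_iff_right _ hsL).1 hwL
    have hu0 : (⟨u, hu⟩ : U) ≠ 0 := by
      intro h
      have : u = 0 := congrArg Subtype.val h
      exact hw (by simpa [this] using hsv)
    refine ⟨Projectivization.mk (ZMod p) ⟨u, hu⟩ hu0, Subtype.ext ?_⟩
    obtain ⟨a, ha⟩ := Projectivization.exists_smul_eq_mk_rep (ZMod p) (⟨u, hu⟩ : U) hu0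
    apply Submodule.eq_of_le_of_finrank_eq
    · rw [Submodule.span_le]
      rintro x (rfl | rfl)
      · exact hvL
      · rw [← ha]
        exact L.smul_mem (a : ZMod p) huL
    · rw [hL2]
      exact aux_pair U v hv hd _ (Subtype.property _)
        (by simpa using Projectivization.rep_nonzero _)
end

section
/- If L is a 2-dimensional totally isotropic subspace of V, then the number of 2-dimensional totally isotropic subspaces H of V with H ∩ L ≠ {0} (this count includes L itself) is p(p+1)+1. -/
open Module

lemma aux_card (p : ℕ) [Fact p.Prime] {V : Type*} [AddCommGroup V]
    [Module (ZMod p) V] [FiniteDimensional (ZMod p) V] (H : Submodule (ZMod p) V) :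
    (H : Set V).ncard = p ^ finrank (ZMod p) H := by
  have h := Module.natCard_eq_pow_finrank (K := ZMod p) (V := H)
  rw [Nat.card_zmod] at h
  rw [← h]
  rfl

lemma aux_diff (p : ℕ) [Fact p.Prime] {V : Type*} [AddCommGroup V]
    [Module (ZMod p) V] [FiniteDimensional (ZMod p) V] (H L : Submodule (ZMod p) V) :
    Nat.card {v : V // v ∈ H ∧ v ∉ L} + p ^ finrank (ZMod p) (H ⊓ L : Submodule (ZMod p) V)
      = p ^ finrank (ZMod p) H := by
  have : Finite V := Module.finite_of_finite (ZMod p)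
  rw [← aux_card, ← aux_card]
  have h := Set.ncard_inter_add_ncard_diff_eq_ncard (H : Set V) (L : Set V) (Set.toFinite _)
  rw [← h, add_comm]
  rfl

lemma aux_perp (p : ℕ) [Fact p.Prime] (V : Type*) [AddCommGroup V]
    [Module (ZMod p) V] [FiniteDimensional (ZMod p) V]
    (hV : finrank (ZMod p) V = 4)
    (B : V →ₗ[ZMod p] V →ₗ[ZMod p] ZMod p)
    (hnd : ∀ x : V, (∀ y : V, B x y = 0) → x = 0)
    (L : Submodule (ZMod p) V) (hL2 : finrank (ZMod p) L = 2)
    (hLiso : ∀ x ∈ L, ∀ y ∈ L, B x y = 0) (v : V) (hv : ∀ l ∈ L, B v l = 0) : v ∈ L := by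
  let φ : V →ₗ[ZMod p] (L →ₗ[ZMod p] ZMod p) := (LinearMap.lcomp (ZMod p) (ZMod p) L.subtype) ∘ₗ B
  have hinj : Function.Injective B := by
    rw [← LinearMap.ker_eq_bot, LinearMap.ker_eq_bot']
    intro x hx
    exact hnd x (fun y => by simp [hx])
  have hsurjB : Function.Surjective B := by
    refine (LinearMap.injective_iff_surjective_of_finrank_eq_finrank ?_).1 hinj
    exact (Subspace.dual_finrank_eq).symm
  have hsurj : Function.Surjective φ := by
    intro f
    obtain ⟨g, hg⟩ := LinearMap.exists_extend f
    obtain ⟨x, hx⟩ := hsurjB g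
    refine ⟨x, ?_⟩
    rw [← hg, ← hx]
    rfl
  have h1 := LinearMap.finrank_range_add_finrank_ker φ
  rw [LinearMap.range_eq_top.2 hsurj, finrank_top, hV] at h1
  have h2 : finrank (ZMod p) (L →ₗ[ZMod p] ZMod p) = 2 := by
    rw [← hL2]; exact Subspace.dual_finrank_eq
  have h3 : L ≤ LinearMap.ker φ := by
    intro x hx
    rw [LinearMap.mem_ker]
    ext y
    exact hLiso x hx y y.2
  have h4 : L = LinearMap.ker φ := Submodule.eq_of_le_of_finrank_eq h3 (by omega)
  rw [h4, LinearMap.mem_ker]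
  ext y
  exact hv y y.2

theorem stmt_2 (p : ℕ) [Fact p.Prime] (V : Type*) [AddCommGroup V]
    [Module (ZMod p) V] [FiniteDimensional (ZMod p) V]
    (hV : finrank (ZMod p) V = 4)
    (B : V →ₗ[ZMod p] V →ₗ[ZMod p] ZMod p)
    (halt : ∀ x : V, B x x = 0)
    (hnd : ∀ x : V, (∀ y : V, B x y = 0) → x = 0)
    (L : Submodule (ZMod p) V) (hL2 : finrank (ZMod p) L = 2)
    (hLiso : ∀ x ∈ L, ∀ y ∈ L, B x y = 0) :
    Nat.card {H : Submodule (ZMod p) V //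
      finrank (ZMod p) H = 2 ∧ (∀ x ∈ H, ∀ y ∈ H, B x y = 0) ∧ H ⊓ L ≠ ⊥}
      = p * (p + 1) + 1 := by
  have hfin : Finite V := Module.finite_of_finite (ZMod p)
  have hfinS : Finite (Submodule (ZMod p) V) :=
    Finite.of_injective (fun H => (H : Set V)) SetLike.coe_injective
  have hskew : ∀ x y, B x y = - B y x := by
    intro x y
    have := halt (x + y)
    simp only [map_add, LinearMap.add_apply, halt] at this
    linear_combination this
  let T : Set (Submodule (ZMod p) V) := {H | (finrank (ZMod p) H = 2 ∧
    (∀ x ∈ H, ∀ y ∈ H, B x y = 0) ∧ H ⊓ L ≠ ⊥) ∧ H ≠ L}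
  have hLbot : L ≠ ⊥ := by
    rintro rfl
    simp at hL2
  have hS : {H : Submodule (ZMod p) V | finrank (ZMod p) H = 2 ∧
      (∀ x ∈ H, ∀ y ∈ H, B x y = 0) ∧ H ⊓ L ≠ ⊥} = insert L T := by
    ext H
    simp only [T, Set.mem_insert_iff, Set.mem_setOf_eq]
    by_cases h : H = L
    · subst h
      simp only [inf_idem]
      tauto
    · tauto
  change Set.ncard {H : Submodule (ZMod p) V | finrank (ZMod p) H = 2 ∧
      (∀ x ∈ H, ∀ y ∈ H, B x y = 0) ∧ H ⊓ L ≠ ⊥} = _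
  rw [hS, Set.ncard_insert_of_notMem (by simp [T]) (Set.toFinite _)]
  congr 1
  -- the isotropic plane through a vector outside L
  let K : V → Submodule (ZMod p) V := fun v => L ⊓ LinearMap.ker (B v)
  have hK : ∀ v, v ∉ L → finrank (ZMod p) (K v) = 1 := by
    intro v hv
    have h1 := LinearMap.finrank_range_add_finrank_ker ((B v).domRestrict L)
    rw [hL2] at h1
    have h2 : (B v).domRestrict L ≠ 0 := by
      intro h0
      apply hv
      refine aux_perp p V hV B hnd L hL2 hLiso v (fun l hl => ?_)
      exact LinearMap.congr_fun h0 ⟨l, hl⟩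
    have h3 : finrank (ZMod p) (LinearMap.range ((B v).domRestrict L)) = 1 := by
      rw [LinearMap.range_eq_top.2 (LinearMap.surjective h2), finrank_top, finrank_self]
    have h4 : K v = (LinearMap.ker ((B v).domRestrict L)).map L.subtype := by
      ext x
      simp [K, and_comm]
    rw [h4, Submodule.finrank_map_subtype_eq]
    omega
  have hF : ∀ v, v ∉ L → finrank (ZMod p) (K v ⊔ Submodule.span (ZMod p) {v} : Submodule (ZMod p) V) = 2 := by
    intro v hv
    have hv0 : v ≠ 0 := by rintro rfl; exact hv L.zero_mem
    have h1 := Submodule.finrank_sup_add_finrank_inf_eq (K v) (Submodule.span (ZMod p) {v})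
    have h2 : K v ⊓ Submodule.span (ZMod p) {v} = ⊥ := by
      rw [← disjoint_iff, Submodule.disjoint_span_singleton' hv0]
      exact fun h => hv h.1
    rw [h2, hK v hv, finrank_span_singleton hv0, finrank_bot] at h1
    omega
  have huniq : ∀ v, v ∉ L → ∀ H ∈ T, v ∈ H → K v ⊔ Submodule.span (ZMod p) {v} = H := by
    rintro v hv H ⟨⟨h1, h2, h3⟩, -⟩ hvH
    have h4 : H ⊓ L ≤ K v := fun x hx => ⟨hx.2, h2 v hvH x hx.1⟩
    have h5 : H ⊓ L = K v := by
      apply Submodule.eq_of_le_of_finrank_le h4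
      rw [hK v hv]
      exact Submodule.one_le_finrank_iff.2 h3
    apply Submodule.eq_of_le_of_finrank_eq
    · refine sup_le (h5 ▸ inf_le_left) ?_
      rwa [Submodule.span_singleton_le_iff_mem]
    · rw [hF v hv, h1]
  have hexT : ∀ v, v ∉ L → K v ⊔ Submodule.span (ZMod p) {v} ∈ T := by
    intro v hv
    have hvm : v ∈ K v ⊔ Submodule.span (ZMod p) {v} :=
      Submodule.mem_sup_right (Submodule.mem_span_singleton_self v)
    refine ⟨⟨hF v hv, ?_, ?_⟩, ?_⟩
    · intro x hx y hy
      obtain ⟨a, ha, b, hb, rfl⟩ := Submodule.mem_sup.1 hx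
      obtain ⟨c, hc, d, hd, rfl⟩ := Submodule.mem_sup.1 hy
      obtain ⟨s, rfl⟩ := Submodule.mem_span_singleton.1 hb
      obtain ⟨t, rfl⟩ := Submodule.mem_span_singleton.1 hd
      have e1 : B a c = 0 := hLiso a ha.1 c hc.1
      have e2 : B v c = 0 := hc.2
      have e3 : B v a = 0 := ha.2
      have e4 : B a v = 0 := by rw [hskew, e3, neg_zero]
      simp [e1, e2, e4, halt]
    · intro h0
      have : K v ≤ ⊥ := by
        rw [← h0]; exact le_inf le_sup_left inf_le_left
      have h1 := hK v hv
      rw [le_bot_iff.1 this] at h1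
      simp at h1
    · intro h0
      rw [h0] at hvm
      exact hv hvm
  let e : (Σ H : T, {v : V // v ∈ H.1 ∧ v ∉ L}) ≃ {v : V // v ∈ (⊤ : Submodule (ZMod p) V) ∧ v ∉ L} :=
    { toFun := fun x => ⟨x.2.1, trivial, x.2.2.2⟩
      invFun := fun v => ⟨⟨_, hexT v.1 v.2.2⟩, ⟨v.1,
        Submodule.mem_sup_right (Submodule.mem_span_singleton_self v.1), v.2.2⟩⟩
      left_inv := by
        rintro ⟨⟨H, hH⟩, ⟨v, hv, hvL⟩⟩
        have := huniq v hvL H hH hv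
        subst this
        rfl
      right_inv := fun v => rfl }
  have hc := Nat.card_congr e
  have hp : 2 ≤ p := (Fact.out : p.Prime).two_le
  have hfib : ∀ H : T, Nat.card {v : V // v ∈ H.1 ∧ v ∉ L} = p ^ 2 - p := by
    rintro ⟨H, ⟨h1, h2, h3⟩, h4⟩
    have h5 := aux_diff p H L
    have h6 : finrank (ZMod p) (H ⊓ L : Submodule (ZMod p) V) = 1 := by
      have := Submodule.one_le_finrank_iff.2 h3
      have h7 : finrank (ZMod p) (H ⊓ L : Submodule (ZMod p) V) < 2 := by
        by_contra hcon
        have e1 : H ⊓ L = H := Submodule.eq_of_le_of_finrank_le inf_le_left (by omega)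
        have e2 : H ⊓ L = L := Submodule.eq_of_le_of_finrank_le inf_le_right (by omega)
        exact h4 (e1.symm.trans e2)
      omega
    rw [h6, h1, pow_one] at h5
    simp only
    omega
  have htot := aux_diff p (⊤ : Submodule (ZMod p) V) L
  rw [top_inf_eq, hL2, finrank_top, hV, ← hc] at htot
  have : Fintype T := Fintype.ofFinite _
  rw [Nat.card_sigma, Finset.sum_congr rfl (fun H _ => hfib H), Finset.sum_const,
    Finset.card_univ, ← Nat.card_eq_fintype_card, smul_eq_mul] at htot
  change Nat.card T = _
  obtain ⟨q, rfl⟩ : ∃ q, p = q + 2 := ⟨p - 2, by omega⟩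
  have h8 : (q + 2) ^ 2 - (q + 2) = (q + 2) * (q + 1) := by
    rw [Nat.sub_eq_iff_eq_add (by nlinarith)]; ring
  rw [h8] at htot
  have h9 : 0 < (q + 2) * (q + 1) := by positivity
  apply Nat.eq_of_mul_eq_mul_right h9
  nlinarith [htot]
end

section
/- If L is a 2-dimensional subspace of V on which the restriction of B is nondegenerate (equivalently, L is not totally isotropic), then the number of 2-dimensional totally isotropic subspaces H of V with H ∩ L ≠ {0} is (p+1)^2. -/
open Module
section
variable {p : ℕ} [Fact p.Prime] {V : Type*} [AddCommGroup V]
    [Module (ZMod p) V] [FiniteDimensional (ZMod p) V]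

theorem aux_card_lines (L : Submodule (ZMod p) V) (hL2 : finrank (ZMod p) L = 2) :
    Nat.card {l : Submodule (ZMod p) L // finrank (ZMod p) l = 1} = p + 1 := by
  rw [← Nat.card_congr (Projectivization.equivSubmodule (ZMod p) L),
    Projectivization.card_of_finrank_two (ZMod p) L hL2]
  simp

theorem aux_span (B : V →ₗ[ZMod p] V →ₗ[ZMod p] ZMod p)
    (halt : ∀ x : V, B x x = 0)
    (L : Submodule (ZMod p) V) (hL2 : finrank (ZMod p) L = 2)
    (hLnd : ∀ x ∈ L, (∀ y ∈ L, B x y = 0) → x = 0)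
    (x : V) (hx : x ∈ L) (hx0 : x ≠ 0) (a : V) (ha : a ∈ L) (hxa : B x a = 0) :
    a ∈ Submodule.span (ZMod p) {x} := by
  by_contra hn
  apply hx0
  apply hLnd x hx
  have h1 : Submodule.span (ZMod p) {x} < LinearMap.ker (B x) ⊓ L := by
    refine lt_of_le_of_ne ?_ ?_
    · rw [Submodule.span_singleton_le_iff_mem]
      exact ⟨halt x, hx⟩
    · intro h
      exact hn (h ▸ ⟨hxa, ha⟩)
  have h2 := Submodule.finrank_lt_finrank_of_lt h1
  rw [finrank_span_singleton hx0] at h2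
  have h3 : LinearMap.ker (B x) ⊓ L = L := by
    apply Submodule.eq_of_le_of_finrank_le inf_le_right
    omega
  intro y hy
  rw [← h3] at hy
  exact hy.1

theorem aux_map (L l : Submodule (ZMod p) V) :
    finrank (ZMod p) (l.comap L.subtype) = finrank (ZMod p) (l ⊓ L : Submodule (ZMod p) V) := by
  rw [← Submodule.finrank_map_subtype_eq L, Submodule.map_comap_subtype, inf_comm]

theorem aux_sup (L M : Submodule (ZMod p) V) (h : Disjoint L M)
    (l : Submodule (ZMod p) L) (m : Submodule (ZMod p) M) :
    (l.map L.subtype ⊔ m.map M.subtype).comap L.subtype = l := by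
  apply Submodule.map_injective_of_injective L.subtype_injective
  rw [Submodule.map_comap_subtype, inf_comm, sup_inf_assoc_of_le _ (Submodule.map_subtype_le L l),
    (h.symm.mono_left (Submodule.map_subtype_le M m)).eq_bot, sup_bot_eq]

theorem aux_line (B : V →ₗ[ZMod p] V →ₗ[ZMod p] ZMod p)
    (halt : ∀ x : V, B x x = 0) (L : Submodule (ZMod p) V)
    (l : Submodule (ZMod p) L) (hl : finrank (ZMod p) l = 1) (x y : V)
    (hx : x ∈ l.map L.subtype) (hy : y ∈ l.map L.subtype) : B x y = 0 := by
  rw [← Submodule.finrank_map_subtype_eq L, finrank_eq_one_iff'] at hl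
  obtain ⟨v, -, hv⟩ := hl
  obtain ⟨c, hc⟩ := hv ⟨x, hx⟩
  obtain ⟨d, hd⟩ := hv ⟨y, hy⟩
  have hc' := congrArg Subtype.val hc
  have hd' := congrArg Subtype.val hd
  simp only [Submodule.coe_smul] at hc' hd'
  rw [← hc', ← hd']
  simp [halt]
end

theorem stmt_3 (p : ℕ) [Fact p.Prime] (V : Type*) [AddCommGroup V]
    [Module (ZMod p) V] [FiniteDimensional (ZMod p) V]
    (hV : finrank (ZMod p) V = 4)
    (B : V →ₗ[ZMod p] V →ₗ[ZMod p] ZMod p)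
    (halt : ∀ x : V, B x x = 0)
    (hnd : ∀ x : V, (∀ y : V, B x y = 0) → x = 0)
    (L : Submodule (ZMod p) V) (hL2 : finrank (ZMod p) L = 2)
    (hLnd : ∀ x ∈ L, (∀ y ∈ L, B x y = 0) → x = 0) :
    Nat.card {H : Submodule (ZMod p) V //
      finrank (ZMod p) H = 2 ∧ (∀ x ∈ H, ∀ y ∈ H, B x y = 0) ∧ H ⊓ L ≠ ⊥}
      = (p + 1) ^ 2 := by
  have hA : LinearMap.IsAlt B := halt
  have hneg : ∀ x y, B x y = 0 → B y x = 0 := fun x y h => hA.isRefl x y h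
  obtain ⟨M, hM, hLM⟩ : ∃ M : Submodule (ZMod p) V, IsCompl L M ∧
      ∀ x ∈ L, ∀ y ∈ M, B x y = 0 := by
    refine ⟨LinearMap.BilinForm.orthogonal B L, ?_, ?_⟩
    · apply LinearMap.BilinForm.isCompl_orthogonal_of_restrict_nondegenerate hA.isRefl
      constructor
      · intro x hx
        exact Subtype.ext (hLnd x x.2 fun y hy => hx ⟨y, hy⟩)
      · intro x hx
        exact Subtype.ext (hLnd x x.2 fun y hy => hneg _ _ (hx ⟨y, hy⟩))
    · intro x hx y hy
      exact hy x hx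
  have hM2 : finrank (ZMod p) M = 2 := by
    have := Submodule.finrank_add_eq_of_isCompl hM
    omega
  have key : ∀ H : Submodule (ZMod p) V, finrank (ZMod p) H = 2 →
      (∀ x ∈ H, ∀ y ∈ H, B x y = 0) → H ⊓ L ≠ ⊥ →
      (H ⊓ L) ⊔ (H ⊓ M) = H ∧ finrank (ZMod p) (H ⊓ L : Submodule (ZMod p) V) = 1 ∧
        finrank (ZMod p) (H ⊓ M : Submodule (ZMod p) V) = 1 := by
    intro H h2 hiso hne
    obtain ⟨x, ⟨hxH, hxL⟩, hx0⟩ := Submodule.exists_mem_ne_zero_of_ne_bot hne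
    have hs : Submodule.span (ZMod p) {x} = H ⊓ L := by
      apply le_antisymm
      · rw [Submodule.span_singleton_le_iff_mem]
        exact ⟨hxH, hxL⟩
      · rintro a ⟨haH, haL⟩
        exact aux_span B halt L hL2 hLnd x hxL hx0 a haL (hiso x hxH a haH)
    have e1 : (H ⊓ L) ⊔ (H ⊓ M) = H := by
      apply le_antisymm (sup_le inf_le_left inf_le_left)
      intro h hh
      obtain ⟨a, ha, b, hb, rfl⟩ := Submodule.mem_sup.1
        (show h ∈ L ⊔ M by rw [hM.sup_eq_top]; trivial)
      have hxa : B x a = 0 := by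
        have := hiso x hxH _ hh
        rwa [map_add, hLM x hxL b hb, add_zero] at this
      have := aux_span B halt L hL2 hLnd x hxL hx0 a ha hxa
      rw [hs] at this
      refine Submodule.add_mem_sup this ⟨?_, hb⟩
      simpa using H.sub_mem hh this.1
    have f1 : finrank (ZMod p) (H ⊓ L : Submodule (ZMod p) V) = 1 := by
      rw [← hs, finrank_span_singleton hx0]
    refine ⟨e1, f1, ?_⟩
    have := Submodule.finrank_sup_add_finrank_inf_eq (H ⊓ L) (H ⊓ M)
    rw [(hM.disjoint.mono inf_le_right inf_le_right : Disjoint (H ⊓ L) (H ⊓ M)).eq_bot, e1,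
      finrank_bot] at this
    omega
  rw [sq]
  nth_rw 1 [← aux_card_lines L hL2]
  rw [← aux_card_lines M hM2, ← Nat.card_prod]
  refine Nat.card_congr
    { toFun := fun H => (⟨H.1.comap L.subtype, ?_⟩, ⟨H.1.comap M.subtype, ?_⟩)
      invFun := fun q => ⟨q.1.1.map L.subtype ⊔ q.2.1.map M.subtype, ?_, ?_, ?_⟩
      left_inv := ?_
      right_inv := ?_ }
  · rw [aux_map]
    exact (key H.1 H.2.1 H.2.2.1 H.2.2.2).2.1
  · rw [aux_map]
    exact (key H.1 H.2.1 H.2.2.1 H.2.2.2).2.2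
  · have := Submodule.finrank_sup_add_finrank_inf_eq (q.1.1.map L.subtype) (q.2.1.map M.subtype)
    rw [(hM.disjoint.mono (Submodule.map_subtype_le L _) (Submodule.map_subtype_le M _)).eq_bot,
      finrank_bot, Submodule.finrank_map_subtype_eq, Submodule.finrank_map_subtype_eq,
      q.1.2, q.2.2] at this
    exact this
  · intro x hx y hy
    obtain ⟨a, ha, b, hb, rfl⟩ := Submodule.mem_sup.1 hx
    obtain ⟨c, hc, d, hd, rfl⟩ := Submodule.mem_sup.1 hy
    have haL := Submodule.map_subtype_le L _ ha
    have hcL := Submodule.map_subtype_le L _ hc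
    have hbM := Submodule.map_subtype_le M _ hb
    have hdM := Submodule.map_subtype_le M _ hd
    simp [aux_line B halt L _ q.1.2 a c ha hc, aux_line B halt M _ q.2.2 b d hb hd,
      hLM a haL d hdM, hneg _ _ (hLM c hcL b hbM)]
  · intro h
    have h1 := q.1.2
    rw [← aux_sup L M hM.disjoint q.1.1 q.2.1, aux_map, h, finrank_bot] at h1
    omega
  · intro H
    apply Subtype.ext
    simp only [Submodule.map_comap_subtype]
    rw [inf_comm L, inf_comm M]
    exact (key H.1 H.2.1 H.2.2.1 H.2.2.2).1
  · rintro ⟨l, m⟩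
    refine Prod.ext (Subtype.ext ?_) (Subtype.ext ?_)
    · exact aux_sup L M hM.disjoint l.1 m.1
    · simp only
      rw [sup_comm]
      exact aux_sup M L hM.disjoint.symm m.1 l.1
end

section
/- Assume p ≥ 3 and that V = r ⊕ s, where r and s are 2-dimensional subspaces which are orthogonal to each other (B(x,y)=0 for all x ∈ r, y ∈ s). Let v ∈ V be a vector with v ∉ r ∪ s, and let t be any 2-dimensional subspace of V. Then there exists a 2-dimensional totally isotropic subspace L of V such that v ∈ L, L ≠ t, L ∩ r = {0}, and L ∩ s = {0}. -/
open Module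

/-- Let `p ≥ 3`, `V = r ⊕ s` with `r, s` 2-dimensional mutually orthogonal subspaces
of a 4-dimensional symplectic space over `F_p`, let `v ∉ r ∪ s` and let `t` be any
2-dimensional subspace. Then there is a 2-dimensional totally isotropic subspace `L`
with `v ∈ L`, `L ≠ t`, `L ∩ r = 0` and `L ∩ s = 0`. -/
theorem stmt_4 (p : ℕ) [Fact p.Prime] (hp3 : 3 ≤ p) (V : Type*) [AddCommGroup V]
    [Module (ZMod p) V] [FiniteDimensional (ZMod p) V]
    (hV : finrank (ZMod p) V = 4)
    (B : V →ₗ[ZMod p] V →ₗ[ZMod p] ZMod p)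
    (halt : ∀ x : V, B x x = 0)
    (hnd : ∀ x : V, (∀ y : V, B x y = 0) → x = 0)
    (r s : Submodule (ZMod p) V)
    (hr2 : finrank (ZMod p) r = 2) (hs2 : finrank (ZMod p) s = 2)
    (hinf : r ⊓ s = ⊥) (hsup : r ⊔ s = ⊤)
    (horth : ∀ x ∈ r, ∀ y ∈ s, B x y = 0)
    (v : V) (hv : v ∉ (r : Set V) ∪ (s : Set V))
    (t : Submodule (ZMod p) V) (ht2 : finrank (ZMod p) t = 2) :
    ∃ L : Submodule (ZMod p) V, finrank (ZMod p) L = 2 ∧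
      (∀ x ∈ L, ∀ y ∈ L, B x y = 0) ∧ v ∈ L ∧ L ≠ t ∧ L ⊓ r = ⊥ ∧ L ⊓ s = ⊥ := by
  have hz : ∀ x, x ∈ r → x ∈ s → x = 0 := fun x h1 h2 => by
    have : x ∈ r ⊓ s := ⟨h1, h2⟩
    rw [hinf] at this
    simpa using this
  have hsk : ∀ x y, B x y = - B y x := fun x y => by
    have h := halt (x + y)
    simp only [map_add, LinearMap.add_apply, halt] at h
    linear_combination h
  have hdec : ∀ y : V, ∃ y1 ∈ r, ∃ y2 ∈ s, y1 + y2 = y := fun y => by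
    have : y ∈ r ⊔ s := by rw [hsup]; trivial
    exact Submodule.mem_sup.1 this
  have hor' : ∀ x ∈ s, ∀ y ∈ r, B x y = 0 := fun x hx y hy => by
    rw [hsk, horth y hy x hx, neg_zero]
  obtain ⟨a, ha, b, hb, rfl⟩ := hdec v
  have ha0 : a ≠ 0 := by
    rintro rfl
    exact hv (Or.inr (by simpa using hb))
  have hb0 : b ≠ 0 := by
    rintro rfl
    exact hv (Or.inl (by simpa using ha))
  have hA : ∃ a' ∈ r, B a a' = 1 := by
    by_contra! hcon
    refine ha0 (hnd a fun y => ?_)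
    obtain ⟨y1, h1, y2, h2, rfl⟩ := hdec y
    rw [map_add, horth a ha y2 h2, add_zero]
    by_contra hne
    refine hcon ((B a y1)⁻¹ • y1) (r.smul_mem _ h1) ?_
    rw [map_smul, smul_eq_mul, inv_mul_cancel₀ hne]
  have hB : ∃ b' ∈ s, B b b' = 1 := by
    by_contra! hcon
    refine hb0 (hnd b fun y => ?_)
    obtain ⟨y1, h1, y2, h2, rfl⟩ := hdec y
    rw [map_add, hor' b hb y1 h1, zero_add]
    by_contra hne
    refine hcon ((B b y2)⁻¹ • y2) (s.smul_mem _ h2) ?_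
    rw [map_smul, smul_eq_mul, inv_mul_cancel₀ hne]
  obtain ⟨a', ha', haa⟩ := hA
  obtain ⟨b', hb', hbb⟩ := hB
  have haa2 : B a' a = -1 := by rw [hsk, haa]
  have hbb2 : B b' b = -1 := by rw [hsk, hbb]
  have key : ∀ c : ZMod p, ∀ L, L = Submodule.span (ZMod p) {a + b, a' - b' + c • a} →
      finrank (ZMod p) L = 2 ∧
      (∀ x ∈ L, ∀ y ∈ L, B x y = 0) ∧ a + b ∈ L ∧ L ⊓ r = ⊥ ∧ L ⊓ s = ⊥ := by
    rintro c L rfl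
    have kr : ∀ α β : ZMod p, α • (a + b) + β • (a' - b' + c • a) ∈ r → α = 0 ∧ β = 0 := by
      intro α β h
      have h0 : α • b - β • b' = 0 := by
        apply hz
        · have h1 : α • a + β • a' + (β * c) • a ∈ r :=
            r.add_mem (r.add_mem (r.smul_mem _ ha) (r.smul_mem _ ha')) (r.smul_mem _ ha)
          have := r.sub_mem h h1
          convert this using 1
          module
        · exact s.sub_mem (s.smul_mem _ hb) (s.smul_mem _ hb')
      have e1 := congrArg (B b) h0
      have e2 := congrArg (B b') h0
      simp [halt, hbb, hbb2] at e1 e2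
      exact ⟨e2, e1⟩
    have ks : ∀ α β : ZMod p, α • (a + b) + β • (a' - b' + c • a) ∈ s → α = 0 ∧ β = 0 := by
      intro α β h
      have h0 : α • a + β • a' + (β * c) • a = 0 := by
        apply hz
        · exact
            r.add_mem (r.add_mem (r.smul_mem _ ha) (r.smul_mem _ ha')) (r.smul_mem _ ha)
        · have h1 := s.sub_mem (s.smul_mem α hb) (s.smul_mem β hb')
          have := s.sub_mem h h1
          convert this using 1
          module
      have e1 := congrArg (B a) h0
      have e2 := congrArg (B a') h0
      simp [halt, haa, haa2] at e1 e2
      subst e1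
      simp at e2
      exact ⟨e2, rfl⟩
    refine ⟨?_, ?_, Submodule.subset_span (by simp), ?_, ?_⟩
    · have hli : LinearIndependent (ZMod p) ![a + b, a' - b' + c • a] := by
        rw [LinearIndependent.pair_iff]
        intro α β h
        exact kr α β (by rw [h]; exact r.zero_mem)
      have := finrank_span_eq_card hli
      rw [Matrix.range_cons_cons_empty] at this
      simpa using this
    · intro x hx y hy
      obtain ⟨x1, x2, rfl⟩ := Submodule.mem_span_pair.1 hx
      obtain ⟨y1, y2, rfl⟩ := Submodule.mem_span_pair.1 hy
      simp [halt, haa, haa2, hbb, hbb2, horth a ha b hb, horth a ha b' hb', horth a' ha' b hb,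
        horth a' ha' b' hb', hor' b hb a ha, hor' b hb a' ha', hor' b' hb' a ha,
        hor' b' hb' a' ha']
      ring
    · rw [eq_bot_iff]
      rintro x ⟨hx, hxr⟩
      obtain ⟨x1, x2, rfl⟩ := Submodule.mem_span_pair.1 hx
      obtain ⟨rfl, rfl⟩ := kr _ _ hxr
      simp
    · rw [eq_bot_iff]
      rintro x ⟨hx, hxr⟩
      obtain ⟨x1, x2, rfl⟩ := Submodule.mem_span_pair.1 hx
      obtain ⟨rfl, rfl⟩ := ks _ _ hxr
      simp
  by_cases h0 : Submodule.span (ZMod p) {a + b, a' - b' + (0 : ZMod p) • a} = t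
  · obtain ⟨k1, k2, k3, k4, k5⟩ := key 1 _ rfl
    refine ⟨_, k1, k2, k3, fun h1 => ha0 ?_, k4, k5⟩
    have m0 : a' - b' + (0 : ZMod p) • a ∈ t := h0 ▸ Submodule.subset_span (by simp)
    have m1 : a' - b' + (1 : ZMod p) • a ∈ t := h1 ▸ Submodule.subset_span (by simp)
    have m : a ∈ t := by
      have := t.sub_mem m1 m0
      convert this using 1
      module
    rw [h1] at k4
    have : a ∈ t ⊓ r := ⟨m, ha⟩
    rw [k4] at this
    simpa using this
  · obtain ⟨k1, k2, k3, k4, k5⟩ := key 0 _ rfl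
    exact ⟨_, k1, k2, k3, h0, k4, k5⟩
end

section
/- Assume p ≥ 3 and that V = r ⊕ s, where r and s are 2-dimensional subspaces which are orthogonal to each other (B(x,y)=0 for all x ∈ r, y ∈ s). Let t be any 2-dimensional subspace of V. Then there exists a 2-dimensional totally isotropic subspace H of V with H ∩ r = {0}, H ∩ s = {0}, and H ∩ t = {0}. -/
open Module

lemma aux_alg {K : Type*} [Field K] (h2 : (2 : K) ≠ 0) (μ : K) (hμ : μ ≠ 0)
    (u1 u2 u3 u4 v1 v2 v3 v4 : K)
    (H : ∀ a b c d : K, a * d - b * c = μ →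
      (u3 - a * u1 - b * u2) * (v4 - c * v1 - d * v2)
        - (v3 - a * v1 - b * v2) * (u4 - c * u1 - d * u2) = 0) :
    u1 * v2 = v1 * u2 ∧ u1 * v3 = v1 * u3 ∧ u1 * v4 = v1 * u4 ∧
    u2 * v3 = v2 * u3 ∧ u2 * v4 = v2 * u4 ∧ u3 * v4 = v3 * u4 := by
  have A1 := H 0 (-μ) 1 0 (by ring)
  have A2 := H 0 μ (-1) 0 (by ring)
  have A3 := H (-μ) (-μ) 1 0 (by ring)
  have A4 := H 0 (-μ) 1 1 (by ring)
  have A5 := H (-μ) (-μ) 0 (-1) (by ring)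
  have k0 : (u3 * v4 - v3 * u4) + μ * (u1 * v2 - v1 * u2) = 0 := by
    have : 2 * ((u3 * v4 - v3 * u4) + μ * (u1 * v2 - v1 * u2)) = 0 := by linear_combination A1 + A2
    simpa [h2] using this
  have a0 : u1 * v4 - v1 * u4 = 0 := by
    have : μ * (u1 * v4 - v1 * u4) = 0 := by linear_combination A3 - A1
    simpa [hμ] using this
  have d0 : u2 * v3 - v2 * u3 = 0 := by linear_combination A4 - A1
  have b0 : u2 * v4 - v2 * u4 = 0 := by
    have : μ * (u2 * v4 - v2 * u4) = 0 := by linear_combination A5 - k0 - μ * a0 + d0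
    simpa [hμ] using this
  have c0 : u1 * v3 - v1 * u3 = 0 := by linear_combination A1 - k0 - μ * b0
  have e0 : u1 * v2 - v1 * u2 = 0 := by
    have : μ * (u1 * v2 - v1 * u2) ^ 2 = 0 := by
      linear_combination (u1 * v2 - v1 * u2) * k0 - (u1*v3-v1*u3) * b0 + (u1*v4-v1*u4) * d0
    simpa [hμ] using this
  refine ⟨?_, ?_, ?_, ?_, ?_, ?_⟩
  · linear_combination e0
  · linear_combination c0
  · linear_combination a0
  · linear_combination d0
  · linear_combination b0
  · linear_combination k0 - μ * e0

lemma aux_basis {K V : Type*} [Field K] [AddCommGroup V] [Module K V] (r : Submodule K V)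
    (hr : finrank K r = 2) : ∃ e0 e1 : V, e0 ∈ r ∧ e1 ∈ r ∧
      (∀ x ∈ r, ∃ a b : K, x = a • e0 + b • e1) ∧
      (∀ a b : K, a • e0 + b • e1 = 0 → a = 0 ∧ b = 0) := by
  have : FiniteDimensional K r := Module.finite_of_finrank_pos (by omega)
  let b := Module.finBasisOfFinrankEq K r hr
  refine ⟨b 0, b 1, (b 0).2, (b 1).2, ?_, ?_⟩
  · intro x hx
    refine ⟨b.repr ⟨x, hx⟩ 0, b.repr ⟨x, hx⟩ 1, ?_⟩
    have := b.sum_repr ⟨x, hx⟩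
    rw [Fin.sum_univ_two] at this
    simpa using (congrArg Subtype.val this).symm
  · intro c d h
    have h' : c • b 0 + d • b 1 = 0 := by
      apply Subtype.ext; simpa using h
    have := Fintype.linearIndependent_iff.1 b.linearIndependent ![c, d] (by simpa using h')
    exact ⟨by simpa using this 0, by simpa using this 1⟩

lemma aux_nd {K V : Type*} [Field K] [AddCommGroup V] [Module K V]
    (B : V →ₗ[K] V →ₗ[K] K) (halt : ∀ x : V, B x x = 0)
    (hnd : ∀ x : V, (∀ y : V, B x y = 0) → x = 0)
    (e0 e1 : V) (h0 : e0 ≠ 0) (h : ∀ y, ∃ a b : K, ∃ z, y = a • e0 + b • e1 + z ∧ B e0 z = 0) :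
    B e0 e1 ≠ 0 := by
  intro h1
  apply h0
  apply hnd
  intro y
  obtain ⟨a, b, z, rfl, hz⟩ := h y
  simp [halt, h1, hz]

/-- Let `p ≥ 3`, `V = r ⊕ s` with `r, s` 2-dimensional mutually orthogonal subspaces
of a 4-dimensional symplectic space over `F_p`, and let `t` be any 2-dimensional
subspace. Then there is a 2-dimensional totally isotropic subspace `H` with
`H ∩ r = 0`, `H ∩ s = 0` and `H ∩ t = 0`. -/
theorem stmt_5 (p : ℕ) [Fact p.Prime] (hp3 : 3 ≤ p) (V : Type*) [AddCommGroup V]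
    [Module (ZMod p) V] [FiniteDimensional (ZMod p) V]
    (hV : finrank (ZMod p) V = 4)
    (B : V →ₗ[ZMod p] V →ₗ[ZMod p] ZMod p)
    (halt : ∀ x : V, B x x = 0)
    (hnd : ∀ x : V, (∀ y : V, B x y = 0) → x = 0)
    (r s : Submodule (ZMod p) V)
    (hr2 : finrank (ZMod p) r = 2) (hs2 : finrank (ZMod p) s = 2)
    (hinf : r ⊓ s = ⊥) (hsup : r ⊔ s = ⊤)
    (horth : ∀ x ∈ r, ∀ y ∈ s, B x y = 0)
    (t : Submodule (ZMod p) V) (ht2 : finrank (ZMod p) t = 2) :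
    ∃ H : Submodule (ZMod p) V, finrank (ZMod p) H = 2 ∧
      (∀ x ∈ H, ∀ y ∈ H, B x y = 0) ∧ H ⊓ r = ⊥ ∧ H ⊓ s = ⊥ ∧ H ⊓ t = ⊥ := by
  have h2 : (2 : ZMod p) ≠ 0 := by
    intro h
    have h' : ((2 : ℕ) : ZMod p) = 0 := by exact_mod_cast h
    rw [ZMod.natCast_eq_zero_iff] at h'
    have := Nat.le_of_dvd (by norm_num) h'
    omega
  have hskew : ∀ x y, B x y = - B y x := by
    intro x y
    have := halt (x + y)
    simp only [map_add, LinearMap.add_apply, halt] at this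
    linear_combination this
  obtain ⟨e0, e1, he0, he1, hes, hel⟩ := aux_basis r hr2
  obtain ⟨f0, f1, hf0, hf1, hfs, hfl⟩ := aux_basis s hs2
  obtain ⟨u, v, hu, hv, hts, htl⟩ := aux_basis t ht2
  have hex : ∀ x, ∃ a b c d : ZMod p, x = a • e0 + b • e1 + (c • f0 + d • f1) := by
    intro x
    have hx : x ∈ r ⊔ s := by rw [hsup]; trivial
    obtain ⟨y, hy, z, hz, rfl⟩ := Submodule.mem_sup.1 hx
    obtain ⟨a, b, rfl⟩ := hes y hy
    obtain ⟨c, d, rfl⟩ := hfs z hz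
    exact ⟨a, b, c, d, rfl⟩
  have hr : ∀ a b : ZMod p, a • e0 + b • e1 ∈ r := fun a b =>
    r.add_mem (r.smul_mem _ he0) (r.smul_mem _ he1)
  have hs : ∀ a b : ZMod p, a • f0 + b • f1 ∈ s := fun a b =>
    s.add_mem (s.smul_mem _ hf0) (s.smul_mem _ hf1)
  have hli : ∀ a b c d : ZMod p, a • e0 + b • e1 + (c • f0 + d • f1) = 0 →
      a = 0 ∧ b = 0 ∧ c = 0 ∧ d = 0 := by
    intro a b c d h
    have h1 : a • e0 + b • e1 ∈ r ⊓ s := by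
      refine ⟨hr a b, ?_⟩
      rw [eq_neg_of_add_eq_zero_left h]
      exact s.neg_mem (hs c d)
    rw [hinf, Submodule.mem_bot] at h1
    rw [h1, zero_add] at h
    exact ⟨(hel _ _ h1).1, (hel _ _ h1).2, (hfl _ _ h).1, (hfl _ _ h).2⟩
  have he0' : e0 ≠ 0 := by
    intro h; have := (hel 1 0 (by simp [h])).1; exact one_ne_zero this
  have hf0' : f0 ≠ 0 := by
    intro h; have := (hfl 1 0 (by simp [h])).1; exact one_ne_zero this
  have hu0 : u ≠ 0 := by
    intro h; have := (htl 1 0 (by simp [h])).1; exact one_ne_zero this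
  have hωe : B e0 e1 ≠ 0 := by
    apply aux_nd B halt hnd e0 e1 he0'
    intro y
    obtain ⟨a, b, c, d, rfl⟩ := hex y
    exact ⟨a, b, _, rfl, horth _ he0 _ (hs c d)⟩
  have hωf : B f0 f1 ≠ 0 := by
    apply aux_nd B halt hnd f0 f1 hf0'
    intro y
    obtain ⟨a, b, c, d, rfl⟩ := hex y
    exact ⟨c, d, a • e0 + b • e1, by abel, by rw [hskew, horth _ (hr a b) _ hf0, neg_zero]⟩
  obtain ⟨u1, u2, u3, u4, hue⟩ := hex u
  obtain ⟨v1, v2, v3, v4, hve⟩ := hex v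
  have key : ∃ a b c d : ZMod p, a * d - b * c = -(B e0 e1 / B f0 f1) ∧
      (u3 - a * u1 - b * u2) * (v4 - c * v1 - d * v2)
        - (v3 - a * v1 - b * v2) * (u4 - c * u1 - d * u2) ≠ 0 := by
    by_contra! hcon
    obtain ⟨q12, q13, q14, q23, q24, q34⟩ := aux_alg h2 _
      (neg_ne_zero.2 (div_ne_zero hωe hωf)) u1 u2 u3 u4 v1 v2 v3 v4 hcon
    have z1 := (htl v1 (-u1) (by
      rw [hue, hve]
      linear_combination (norm := module) (-q12) • e1 + (-q13) • f0 + (-q14) • f1)).2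
    have z2 := (htl v2 (-u2) (by
      rw [hue, hve]
      linear_combination (norm := module) (q12) • e0 + (-q23) • f0 + (-q24) • f1)).2
    have z3 := (htl v3 (-u3) (by
      rw [hue, hve]
      linear_combination (norm := module) (q13) • e0 + (q23) • e1 + (-q34) • f1)).2
    have z4 := (htl v4 (-u4) (by
      rw [hue, hve]
      linear_combination (norm := module) (q14) • e0 + (q24) • e1 + (q34) • f0)).2
    rw [neg_eq_zero] at z1 z2 z3 z4
    apply hu0
    rw [hue, z1, z2, z3, z4]
    simp
  obtain ⟨a, b, c, d, hdet, hD⟩ := key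
  have hdet' : B e0 e1 + (a * d - b * c) * B f0 f1 = 0 := by
    rw [hdet]; field_simp; ring
  set h0 : V := e0 + (a • f0 + c • f1) with hh0
  set h1 : V := e1 + (b • f0 + d • f1) with hh1
  have hmem : ∀ x ∈ Submodule.span (ZMod p) {h0, h1}, ∃ m n : ZMod p,
      x = m • e0 + n • e1 + ((m * a + n * b) • f0 + (m * c + n * d) • f1) := by
    intro x hx
    obtain ⟨m, n, rfl⟩ := Submodule.mem_span_pair.1 hx
    exact ⟨m, n, by rw [hh0, hh1]; module⟩
  have h01 : B h0 h1 = 0 := by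
    have q1 := horth _ he0 _ (hs b d)
    have q2 : B (a • f0 + c • f1) e1 = 0 := by rw [hskew, horth _ he1 _ (hs a c), neg_zero]
    have q3 : B (a • f0 + c • f1) (b • f0 + d • f1) = (a * d - b * c) * B f0 f1 := by
      simp only [map_add, map_smul, LinearMap.add_apply, LinearMap.smul_apply, halt, smul_eq_mul]
      rw [hskew f1 f0]; ring
    rw [hh0, hh1, map_add, map_add, LinearMap.add_apply, LinearMap.add_apply, q1, q2, q3]
    linear_combination hdet'
  refine ⟨Submodule.span (ZMod p) {h0, h1}, ?_, ?_, ?_, ?_, ?_⟩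
  · have hl : LinearIndependent (ZMod p) ![h0, h1] := by
      rw [LinearIndependent.pair_iff]
      intro m n h
      have := hli m n (m * a + n * b) (m * c + n * d) (by rw [← h, hh0, hh1]; module)
      exact ⟨this.1, this.2.1⟩
    have := finrank_span_eq_card hl
    rw [Matrix.range_cons, Matrix.range_cons, Matrix.range_empty, Set.union_empty, ← Set.insert_eq] at this
    simpa using this
  · intro x hx y hy
    obtain ⟨m, n, rfl⟩ := Submodule.mem_span_pair.1 hx
    obtain ⟨k, l, rfl⟩ := Submodule.mem_span_pair.1 hy
    have h10 : B h1 h0 = 0 := by rw [hskew, h01, neg_zero]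
    simp only [map_add, map_smul, LinearMap.add_apply, LinearMap.smul_apply, halt, h01, h10, smul_zero, add_zero]
  · rw [eq_bot_iff]
    rintro x ⟨hx, hx'⟩
    obtain ⟨m, n, rfl⟩ := hmem x hx
    obtain ⟨i, j, h⟩ := hes _ hx'
    obtain ⟨-, -, z3, z4⟩ := hli (m - i) (n - j) (m * a + n * b) (m * c + n * d)
      (by linear_combination (norm := module) h)
    have hμ : a * d - b * c ≠ 0 := by
      rw [hdet]; exact neg_ne_zero.2 (div_ne_zero hωe hωf)
    have hm : m = 0 := by
      have : (a * d - b * c) * m = 0 := by linear_combination d * z3 - b * z4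
      simpa [hμ] using this
    have hn : n = 0 := by
      have : (a * d - b * c) * n = 0 := by linear_combination a * z4 - c * z3
      simpa [hμ] using this
    simp [hm, hn]
  · rw [eq_bot_iff]
    rintro x ⟨hx, hx'⟩
    obtain ⟨m, n, rfl⟩ := hmem x hx
    obtain ⟨i, j, h⟩ := hfs _ hx'
    obtain ⟨hm, hn, -, -⟩ := hli m n (m * a + n * b - i) (m * c + n * d - j)
      (by linear_combination (norm := module) h)
    simp [hm, hn]
  · rw [eq_bot_iff]
    rintro x ⟨hx, hx'⟩
    obtain ⟨m, n, rfl⟩ := hmem x hx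
    obtain ⟨k, l, h⟩ := hts _ hx'
    obtain ⟨z1, z2, z3, z4⟩ := hli (m - k * u1 - l * v1) (n - k * u2 - l * v2)
      (m * a + n * b - k * u3 - l * v3) (m * c + n * d - k * u4 - l * v4)
      (by rw [hue, hve] at h; linear_combination (norm := module) h)
    have w3 : k * (u3 - a * u1 - b * u2) + l * (v3 - a * v1 - b * v2) = 0 := by
      linear_combination a * z1 + b * z2 - z3
    have w4 : k * (u4 - c * u1 - d * u2) + l * (v4 - c * v1 - d * v2) = 0 := by
      linear_combination c * z1 + d * z2 - z4
    have hk : k = 0 := by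
      refine (mul_eq_zero.1 ?_).resolve_left hD
      linear_combination (v4 - c * v1 - d * v2) * w3 - (v3 - a * v1 - b * v2) * w4
    have hl : l = 0 := by
      refine (mul_eq_zero.1 ?_).resolve_left hD
      linear_combination (u3 - a * u1 - b * u2) * w4 - (u4 - c * u1 - d * u2) * w3
    change _ = _
    rw [h, hk, hl]; simp
end

section
/- If L1, L2, L3 are 2-dimensional subspaces of V which pairwise intersect in {0}, then the number of 2-dimensional subspaces W of V with W ∩ Li ≠ {0} for i = 1,2,3 is exactly 3. -/
open Module

lemma mem_span_pair_two {V : Type*} [AddCommGroup V] [Module (ZMod 2) V] {a b x : V}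
    (hx : x ∈ Submodule.span (ZMod 2) {a, b}) : x = 0 ∨ x = a ∨ x = b ∨ x = a + b := by
  obtain ⟨s, t, rfl⟩ := Submodule.mem_span_pair.1 hx
  have h2 : ∀ z : ZMod 2, z = 0 ∨ z = 1 := by decide
  rcases h2 s with rfl | rfl <;> rcases h2 t with rfl | rfl <;> simp

lemma finrank_span_pair_two {V : Type*} [AddCommGroup V] [Module (ZMod 2) V]
    {L1 L2 : Submodule (ZMod 2) V} (h12 : L1 ⊓ L2 = ⊥) {a b : V} (ha : a ∈ L1) (hb : b ∈ L2)
    (ha0 : a ≠ 0) (hb0 : b ≠ 0) : finrank (ZMod 2) (Submodule.span (ZMod 2) {a, b}) = 2 := by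
  have hli : LinearIndependent (ZMod 2) ![a, b] := by
    rw [LinearIndependent.pair_iff]
    intro s t hst
    have h1 : s • a = 0 := by
      have : s • a ∈ L1 ⊓ L2 := by
        refine ⟨L1.smul_mem _ ha, ?_⟩
        rw [eq_neg_of_add_eq_zero_left hst]
        exact L2.neg_mem (L2.smul_mem _ hb)
      rwa [h12, Submodule.mem_bot] at this
    have h2 : t • b = 0 := by rwa [h1, zero_add] at hst
    exact ⟨(smul_eq_zero.1 h1).resolve_right ha0, (smul_eq_zero.1 h2).resolve_right hb0⟩
  have := finrank_span_eq_card hli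
  rw [Matrix.range_cons_cons_empty] at this
  simpa using this

/-- In a 4-dimensional vector space over `F_2`, if `L1`, `L2`, `L3` are 2-dimensional
subspaces pairwise intersecting in `⊥`, the number of 2-dimensional subspaces meeting
all three nontrivially is exactly 3. -/
theorem stmt_9 (V : Type*) [AddCommGroup V] [Module (ZMod 2) V]
    [FiniteDimensional (ZMod 2) V] (hV : finrank (ZMod 2) V = 4)
    (L1 L2 L3 : Submodule (ZMod 2) V)
    (hL1 : finrank (ZMod 2) L1 = 2) (hL2 : finrank (ZMod 2) L2 = 2)
    (hL3 : finrank (ZMod 2) L3 = 2)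
    (h12 : L1 ⊓ L2 = ⊥) (h13 : L1 ⊓ L3 = ⊥) (h23 : L2 ⊓ L3 = ⊥) :
    Nat.card {W : Submodule (ZMod 2) V //
      finrank (ZMod 2) W = 2 ∧ W ⊓ L1 ≠ ⊥ ∧ W ⊓ L2 ≠ ⊥ ∧ W ⊓ L3 ≠ ⊥} = 3 := by
  have z12 : ∀ x, x ∈ L1 → x ∈ L2 → x = 0 := fun x h h' => by
    have : x ∈ L1 ⊓ L2 := ⟨h, h'⟩
    rwa [h12, Submodule.mem_bot] at this
  have z13 : ∀ x, x ∈ L1 → x ∈ L3 → x = 0 := fun x h h' => by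
    have : x ∈ L1 ⊓ L3 := ⟨h, h'⟩
    rwa [h13, Submodule.mem_bot] at this
  have z23 : ∀ x, x ∈ L2 → x ∈ L3 → x = 0 := fun x h h' => by
    have : x ∈ L2 ⊓ L3 := ⟨h, h'⟩
    rwa [h23, Submodule.mem_bot] at this
  have htop : L1 ⊔ L2 = ⊤ := by
    apply Submodule.eq_top_of_finrank_eq
    have := Submodule.finrank_sup_add_finrank_inf_eq L1 L2
    rw [h12, finrank_bot] at this
    omega
  have hdec : ∀ v : V, ∃ a b, a ∈ L1 ∧ b ∈ L2 ∧ a + b = v := fun v => by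
    have : v ∈ L1 ⊔ L2 := htop ▸ Submodule.mem_top
    obtain ⟨a, ha, b, hb, h⟩ := Submodule.mem_sup.1 this
    exact ⟨a, b, ha, hb, h⟩
  choose p q hp hq hpq using hdec
  have hp0 : ∀ v ∈ L3, v ≠ 0 → p v ≠ 0 := fun v hv h0 h => by
    have h1 := hpq v
    rw [h, zero_add] at h1
    exact h0 (z23 v (h1 ▸ hq v) hv)
  have hq0 : ∀ v ∈ L3, v ≠ 0 → q v ≠ 0 := fun v hv h0 h => by
    have h1 := hpq v
    rw [h, add_zero] at h1
    exact h0 (z13 v (h1 ▸ hp v) hv)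
  have hps : ∀ v, p v ∈ Submodule.span (ZMod 2) {p v, q v} := fun v =>
    Submodule.subset_span (by simp)
  have hqs : ∀ v, q v ∈ Submodule.span (ZMod 2) {p v, q v} := fun v =>
    Submodule.subset_span (by simp)
  have hvs : ∀ v, v ∈ Submodule.span (ZMod 2) {p v, q v} := fun v => by
    have := Submodule.add_mem _ (hps v) (hqs v)
    rwa [hpq] at this
  have hcard : Nat.card {v : L3 // v ≠ 0} = 3 := by
    classical
    haveI : Finite L3 := Module.finite_of_finite (ZMod 2)
    haveI := Fintype.ofFinite L3
    have h4 : Fintype.card L3 = 4 := by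
      rw [Module.card_eq_pow_finrank (K := ZMod 2), hL3, ZMod.card]; norm_num
    rw [Nat.card_eq_fintype_card, Fintype.card_subtype_compl, h4]
    simp
  rw [← hcard]
  symm
  let f : {v : L3 // v ≠ 0} → {W : Submodule (ZMod 2) V //
      finrank (ZMod 2) W = 2 ∧ W ⊓ L1 ≠ ⊥ ∧ W ⊓ L2 ≠ ⊥ ∧ W ⊓ L3 ≠ ⊥} := fun v =>
    ⟨Submodule.span (ZMod 2) {p v.1.1, q v.1.1}, by
      obtain ⟨⟨v, hv⟩, h0⟩ := v
      have h0 : v ≠ 0 := fun h => h0 (Subtype.ext h)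
      exact ⟨finrank_span_pair_two h12 (hp v) (hq v) (hp0 v hv h0) (hq0 v hv h0),
        (Submodule.ne_bot_iff _).2 ⟨p v, ⟨hps v, hp v⟩, hp0 v hv h0⟩,
        (Submodule.ne_bot_iff _).2 ⟨q v, ⟨hqs v, hq v⟩, hq0 v hv h0⟩,
        (Submodule.ne_bot_iff _).2 ⟨v, ⟨hvs v, hv⟩, h0⟩⟩⟩
  refine Nat.card_eq_of_bijective f ⟨?_, ?_⟩
  · rintro ⟨⟨v, hv⟩, h0⟩ ⟨⟨w, hw⟩, h0'⟩ h
    have h0 : v ≠ 0 := fun h => h0 (Subtype.ext h)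
    have h : Submodule.span (ZMod 2) {p v, q v} = Submodule.span (ZMod 2) {p w, q w} :=
      congrArg Subtype.val h
    have hvw : v = w := by
      rcases mem_span_pair_two (h ▸ hvs v) with h1 | h1 | h1 | h1
      · exact absurd h1 h0
      · exact absurd (z13 v (h1 ▸ hp w) hv) h0
      · exact absurd (z23 v (h1 ▸ hq w) hv) h0
      · rw [h1, hpq]
    subst hvw
    rfl
  · rintro ⟨W, hW, h1, h2, h3⟩
    obtain ⟨a, ⟨haW, ha⟩, ha0⟩ := (Submodule.ne_bot_iff _).1 h1
    obtain ⟨b, ⟨hbW, hb⟩, hb0⟩ := (Submodule.ne_bot_iff _).1 h2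
    obtain ⟨v, ⟨hvW, hv⟩, hv0⟩ := (Submodule.ne_bot_iff _).1 h3
    have hspan : Submodule.span (ZMod 2) {a, b} = W := by
      apply Submodule.eq_of_le_of_finrank_eq
      · rw [Submodule.span_le]
        rintro x (rfl | rfl)
        · exact haW
        · exact hbW
      · rw [hW, finrank_span_pair_two h12 ha hb ha0 hb0]
    have hvab : v = a + b := by
      rcases mem_span_pair_two (hspan ▸ hvW) with h1 | h1 | h1 | h1
      · exact absurd h1 hv0
      · exact absurd (z13 v (h1 ▸ ha) hv) hv0
      · exact absurd (z23 v (h1 ▸ hb) hv) hv0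
      · exact h1
    have hpa : p v - a = 0 := by
      apply z12 _ (L1.sub_mem (hp v) ha)
      have : p v - a = b - q v := by
        rw [sub_eq_sub_iff_add_eq_add, hpq, hvab, add_comm]
      rw [this]
      exact L2.sub_mem hb (hq v)
    have hpa : p v = a := sub_eq_zero.1 hpa
    have hqb : q v = b := by
      have := hpq v
      rw [hpa] at this
      exact add_left_cancel (this.trans hvab)
    refine ⟨⟨⟨v, hv⟩, fun h => hv0 (congrArg Subtype.val h)⟩, Subtype.ext ?_⟩
    change Submodule.span (ZMod 2) {p v, q v} = W
    rw [hpa, hqb, hspan]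
end

section
/- If L1, L2, L3 are 2-dimensional subspaces of V which pairwise intersect in {0}, then there exist exactly 2 two-dimensional subspaces W of V with W ∩ Li = {0} for i = 1,2,3. -/
open Module

lemma aux_range {V : Type*} (u v : V) : Set.range ![u, v] = {u, v} := by
  ext x
  simp [eq_comm, or_comm]

set_option synthInstance.maxHeartbeats 400000 in
set_option synthInstance.maxSize 4096 in
set_option maxRecDepth 10000 in
lemma aux_dec : ∀ (s1 s2 t1 t2 : ZMod 2),
      (∀ (p q : ZMod 2), p * s1 + q * t1 = 0 → p * s2 + q * t2 = 0 → p = 0 ∧ q = 0) →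
        (∀ (p q : ZMod 2), p * s1 + q * t1 = p → p * s2 + q * t2 = q → p = 0 ∧ q = 0) →
          s1 = 0 ∧ s2 = 1 ∧ t1 = 1 ∧ t2 = 1 ∨ s1 = 1 ∧ s2 = 1 ∧ t1 = 1 ∧ t2 = 0 := by
  decide

lemma aux_span_s10 {V : Type*} [AddCommGroup V] [Module (ZMod 2) V]
    [FiniteDimensional (ZMod 2) V] {L : Submodule (ZMod 2) V} (hL : finrank (ZMod 2) L = 2)
    {u v : V} (hu : u ∈ L) (hv : v ∈ L)
    (h : ∀ p q : ZMod 2, p • u + q • v = 0 → p = 0 ∧ q = 0) :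
    Submodule.span (ZMod 2) {u, v} = L := by
  have li : LinearIndependent (ZMod 2) ![u, v] := LinearIndependent.pair_iff.2 h
  have := finrank_span_eq_card li
  rw [aux_range, Fintype.card_fin] at this
  apply Submodule.eq_of_le_of_finrank_eq
  · rw [Submodule.span_le]
    rintro x (rfl | rfl) <;> assumption
  · rw [this, hL]

lemma aux_rank {V : Type*} [AddCommGroup V] [Module (ZMod 2) V]
    {u v : V}
    (h : ∀ p q : ZMod 2, p • u + q • v = 0 → p = 0 ∧ q = 0) :
    finrank (ZMod 2) (Submodule.span (ZMod 2) {u, v}) = 2 := by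
  have li : LinearIndependent (ZMod 2) ![u, v] := LinearIndependent.pair_iff.2 h
  have := finrank_span_eq_card li
  rwa [aux_range, Fintype.card_fin] at this

lemma aux_top {V : Type*} [AddCommGroup V] [Module (ZMod 2) V]
    [FiniteDimensional (ZMod 2) V] (hV : finrank (ZMod 2) V = 4)
    {L M : Submodule (ZMod 2) V} (hL : finrank (ZMod 2) L = 2) (hM : finrank (ZMod 2) M = 2)
    (h : L ⊓ M = ⊥) (x : V) : ∃ m ∈ M, x + m ∈ L := by
  have h1 := Submodule.finrank_sup_add_finrank_inf_eq L M
  rw [h, finrank_bot, hL, hM] at h1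
  have h2 : L ⊔ M = ⊤ := Submodule.eq_top_of_finrank_eq (by omega)
  have hx : x ∈ L ⊔ M := h2 ▸ Submodule.mem_top
  obtain ⟨y, hy, z, hz, rfl⟩ := Submodule.mem_sup.1 hx
  exact ⟨-z, M.neg_mem hz, by simpa using hy⟩

lemma aux_zero {V : Type*} [AddCommGroup V] [Module (ZMod 2) V]
    {L M : Submodule (ZMod 2) V} (h : L ⊓ M = ⊥) {x : V} (hx : x ∈ L) (hy : x ∈ M) : x = 0 := by
  have : x ∈ L ⊓ M := ⟨hx, hy⟩
  rwa [h, Submodule.mem_bot] at this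

theorem aux_disj {V : Type*} [AddCommGroup V] [Module (ZMod 2) V] {u v w z : V}
    (h : ∀ p q r s : ZMod 2, p • u + q • v = r • w + s • z → p = 0 ∧ q = 0) :
    Submodule.span (ZMod 2) {u, v} ⊓ Submodule.span (ZMod 2) {w, z} = ⊥ := by
  rw [eq_bot_iff]
  rintro x ⟨hx, hy⟩
  obtain ⟨p, q, rfl⟩ := Submodule.mem_span_pair.1 hx
  obtain ⟨r, s, e⟩ := Submodule.mem_span_pair.1 hy
  obtain ⟨rfl, rfl⟩ := h p q r s e.symm
  simp

/-- In a 4-dimensional vector space over `F_2`, if `L1`, `L2`, `L3` are 2-dimensional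
subspaces pairwise intersecting in `⊥`, there exist exactly 2 two-dimensional subspaces
`W` with `W ⊓ Li = ⊥` for `i = 1, 2, 3`. -/
theorem stmt_10 (V : Type*) [AddCommGroup V] [Module (ZMod 2) V]
    [FiniteDimensional (ZMod 2) V] (hV : finrank (ZMod 2) V = 4)
    (L1 L2 L3 : Submodule (ZMod 2) V)
    (hL1 : finrank (ZMod 2) L1 = 2) (hL2 : finrank (ZMod 2) L2 = 2)
    (hL3 : finrank (ZMod 2) L3 = 2)
    (h12 : L1 ⊓ L2 = ⊥) (h13 : L1 ⊓ L3 = ⊥) (h23 : L2 ⊓ L3 = ⊥) :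
    Nat.card {W : Submodule (ZMod 2) V //
      finrank (ZMod 2) W = 2 ∧ W ⊓ L1 = ⊥ ∧ W ⊓ L2 = ⊥ ∧ W ⊓ L3 = ⊥} = 2 := by
  obtain ⟨a, b, ha, hb, hab⟩ : ∃ a b : V, a ∈ L1 ∧ b ∈ L1 ∧
      ∀ p q : ZMod 2, p • a + q • b = 0 → p = 0 ∧ q = 0 := by
    let B := finBasisOfFinrankEq (ZMod 2) L1 hL1
    refine ⟨B 0, B 1, (B 0).2, (B 1).2, fun p q h => ?_⟩
    have := Fintype.linearIndependent_iff.1 B.linearIndependent ![p, q]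
      (by rw [Fin.sum_univ_two]; exact Subtype.ext (by simpa using h))
    exact ⟨this 0, this 1⟩
  obtain ⟨c, hc, hac⟩ := aux_top hV hL3 hL2 (by rw [inf_comm]; exact h23) a
  obtain ⟨d, hd, hbd⟩ := aux_top hV hL3 hL2 (by rw [inf_comm]; exact h23) b
  have hcd : ∀ p q : ZMod 2, p • c + q • d = 0 → p = 0 ∧ q = 0 := by
    intro p q h
    apply hab
    refine aux_zero h13 (L1.add_mem (L1.smul_mem _ ha) (L1.smul_mem _ hb)) ?_
    have : p • a + q • b = p • (a + c) + q • (b + d) := by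
      rw [← sub_eq_zero, ← neg_eq_zero, ← h]; module
    rw [this]
    exact (L3.add_mem (L3.smul_mem _ hac) (L3.smul_mem _ hbd))
  have K : ∀ p q r s : ZMod 2, p • a + q • b + r • c + s • d = 0 →
      p = 0 ∧ q = 0 ∧ r = 0 ∧ s = 0 := by
    intro p q r s h
    have e : p • a + q • b = -(r • c + s • d) := by
      rw [← sub_eq_zero, ← h]; module
    have h0 : p • a + q • b = 0 := by
      refine aux_zero h12 (L1.add_mem (L1.smul_mem _ ha) (L1.smul_mem _ hb)) ?_
      rw [e]
      exact L2.neg_mem (L2.add_mem (L2.smul_mem _ hc) (L2.smul_mem _ hd))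
    have h1 := hab _ _ h0
    rw [h0, eq_comm, neg_eq_zero] at e
    exact ⟨h1.1, h1.2, hcd _ _ e⟩
  have E1 := aux_span_s10 hL1 ha hb hab
  have E2 := aux_span_s10 hL2 hc hd hcd
  have E3 := aux_span_s10 hL3 hac hbd (fun p q h => by
    obtain ⟨h1, h2, -, -⟩ := K p q p q (by rw [← h]; module)
    exact ⟨h1, h2⟩)
  -- general independence of graph pairs
  have G : ∀ s1 s2 t1 t2 p q : ZMod 2,
      p • (a + (s1 • c + s2 • d)) + q • (b + (t1 • c + t2 • d)) = 0 → p = 0 ∧ q = 0 := by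
    intro s1 s2 t1 t2 p q h
    obtain ⟨h1, h2, -, -⟩ := K p q (p * s1 + q * t1) (p * s2 + q * t2) (by rw [← h]; module)
    exact ⟨h1, h2⟩
  have good : ∀ s1 s2 t1 t2 : ZMod 2,
      ((s1 = 0 ∧ s2 = 1 ∧ t1 = 1 ∧ t2 = 1) ∨ (s1 = 1 ∧ s2 = 1 ∧ t1 = 1 ∧ t2 = 0)) →
      ∀ W, W = Submodule.span (ZMod 2) {a + (s1 • c + s2 • d), b + (t1 • c + t2 • d)} →
      finrank (ZMod 2) W = 2 ∧ W ⊓ L1 = ⊥ ∧ W ⊓ L2 = ⊥ ∧ W ⊓ L3 = ⊥ := by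
    rintro s1 s2 t1 t2 hs W rfl
    refine ⟨aux_rank (G s1 s2 t1 t2), ?_, ?_, ?_⟩
    · rw [← E1]
      refine aux_disj fun p q x y h => ?_
      have := K (p - x) (q - y) (p * s1 + q * t1) (p * s2 + q * t2)
        (by rw [← sub_eq_zero] at h; rw [← h]; module)
      clear h
      revert s1 s2 t1 t2 p q x y
      decide
    · rw [← E2]
      refine aux_disj fun p q x y h => ?_
      have := K p q (p * s1 + q * t1 - x) (p * s2 + q * t2 - y)
        (by rw [← sub_eq_zero] at h; rw [← h]; module)
      exact ⟨this.1, this.2.1⟩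
    · rw [← E3]
      refine aux_disj fun p q x y h => ?_
      have := K (p - x) (q - y) (p * s1 + q * t1 - x) (p * s2 + q * t2 - y)
        (by rw [← sub_eq_zero] at h; rw [← h]; module)
      clear h
      revert s1 s2 t1 t2 p q x y
      decide
  have mem : ∀ W : Submodule (ZMod 2) V,
      finrank (ZMod 2) W = 2 ∧ W ⊓ L1 = ⊥ ∧ W ⊓ L2 = ⊥ ∧ W ⊓ L3 = ⊥ →
      ∃ s1 s2 t1 t2 : ZMod 2,
      ((s1 = 0 ∧ s2 = 1 ∧ t1 = 1 ∧ t2 = 1) ∨ (s1 = 1 ∧ s2 = 1 ∧ t1 = 1 ∧ t2 = 0)) ∧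
      W = Submodule.span (ZMod 2) {a + (s1 • c + s2 • d), b + (t1 • c + t2 • d)} := by
    rintro W ⟨hW, w1, w2, w3⟩
    obtain ⟨s, hs, has⟩ := aux_top hV hW hL2 w2 a
    obtain ⟨t, ht, hbt⟩ := aux_top hV hW hL2 w2 b
    rw [← E2] at hs ht
    obtain ⟨s1, s2, rfl⟩ := Submodule.mem_span_pair.1 hs
    obtain ⟨t1, t2, rfl⟩ := Submodule.mem_span_pair.1 ht
    refine ⟨s1, s2, t1, t2, ?_, (aux_span_s10 hW has hbt (G s1 s2 t1 t2)).symm⟩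
    have M1 : ∀ p q : ZMod 2, p * s1 + q * t1 = 0 → p * s2 + q * t2 = 0 → p = 0 ∧ q = 0 := by
      intro p q h1 h2
      apply G s1 s2 t1 t2
      refine aux_zero w1 (W.add_mem (W.smul_mem _ has) (W.smul_mem _ hbt)) ?_
      have : p • (a + (s1 • c + s2 • d)) + q • (b + (t1 • c + t2 • d)) =
          p • a + q • b + ((p * s1 + q * t1) • c + (p * s2 + q * t2) • d) := by module
      rw [this, h1, h2, zero_smul, zero_smul, add_zero, add_zero]
      exact L1.add_mem (L1.smul_mem _ ha) (L1.smul_mem _ hb)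
    have M3 : ∀ p q : ZMod 2, p * s1 + q * t1 = p → p * s2 + q * t2 = q → p = 0 ∧ q = 0 := by
      intro p q h1 h2
      apply G s1 s2 t1 t2
      refine aux_zero w3 (W.add_mem (W.smul_mem _ has) (W.smul_mem _ hbt)) ?_
      have : p • (a + (s1 • c + s2 • d)) + q • (b + (t1 • c + t2 • d)) =
          p • a + q • b + ((p * s1 + q * t1) • c + (p * s2 + q * t2) • d) := by module
      rw [this, h1, h2]
      have : p • a + q • b + (p • c + q • d) = p • (a + c) + q • (b + d) := by module
      rw [this]
      exact L3.add_mem (L3.smul_mem _ hac) (L3.smul_mem _ hbd)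
    clear hs ht has hbt
    exact aux_dec s1 s2 t1 t2 M1 M3
  have hset : {W : Submodule (ZMod 2) V |
      finrank (ZMod 2) W = 2 ∧ W ⊓ L1 = ⊥ ∧ W ⊓ L2 = ⊥ ∧ W ⊓ L3 = ⊥} =
      {Submodule.span (ZMod 2)
        {a + ((0 : ZMod 2) • c + (1 : ZMod 2) • d), b + ((1 : ZMod 2) • c + (1 : ZMod 2) • d)},
       Submodule.span (ZMod 2)
        {a + ((1 : ZMod 2) • c + (1 : ZMod 2) • d), b + ((1 : ZMod 2) • c + (0 : ZMod 2) • d)}} := by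
    ext W
    constructor
    · intro h
      obtain ⟨s1, s2, t1, t2, ⟨rfl, rfl, rfl, rfl⟩ | ⟨rfl, rfl, rfl, rfl⟩, e⟩ := mem W h
      · exact Or.inl e
      · exact Or.inr e
    · rintro (e | e)
      · exact good 0 1 1 1 (by decide) W e
      · exact good 1 1 1 0 (by decide) W e
  change Nat.card ({W : Submodule (ZMod 2) V |
      finrank (ZMod 2) W = 2 ∧ W ⊓ L1 = ⊥ ∧ W ⊓ L2 = ⊥ ∧ W ⊓ L3 = ⊥} : Set _) = 2
  rw [hset, Nat.card_coe_set_eq]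
  apply Set.ncard_pair
  intro e
  have hm : a + ((0 : ZMod 2) • c + (1 : ZMod 2) • d) ∈ Submodule.span (ZMod 2)
        {a + ((1 : ZMod 2) • c + (1 : ZMod 2) • d), b + ((1 : ZMod 2) • c + (0 : ZMod 2) • d)} := by
    rw [← e]
    exact Submodule.subset_span (Or.inl rfl)
  obtain ⟨p, q, h⟩ := Submodule.mem_span_pair.1 hm
  have := K (p - 1) q (p + q) (p - 1) (by rw [← sub_eq_zero] at h; rw [← h]; module)
  clear h
  revert p q
  decide
end

section
/- If L1 and L2 are distinct 2-dimensional subspaces of V with L1 ∩ L2 ≠ {0}, then the number of 2-dimensional subspaces W of V with W ∩ L1 ≠ {0} and W ∩ L2 ≠ {0} (this count includes L1 and L2 themselves) is exactly 11. -/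
open Module

abbrev UU := Fin 4 → ZMod 2

/-- generators of the eleven lines; coordinates in the basis c, b, a, p -/
def gx : Fin 11 → UU := ![![0,0,0,1], ![0,0,0,1], ![0,0,0,1], ![0,0,0,1], ![0,0,0,1], ![0,0,0,1],
  ![0,0,0,1], ![0,0,1,0], ![0,0,1,0], ![0,0,1,1], ![0,0,1,1]]
def gy : Fin 11 → UU := ![![0,0,1,0], ![0,1,0,0], ![0,1,1,0], ![1,0,0,0], ![1,0,1,0], ![1,1,0,0],
  ![1,1,1,0], ![0,1,0,0], ![0,1,0,1], ![0,1,0,0], ![0,1,0,1]]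

def InSp (x y z : UU) : Prop := z = 0 ∨ z = x ∨ z = y ∨ z = x + y

instance (x y z : UU) : Decidable (InSp x y z) := by unfold InSp; infer_instance

lemma mem_pair {V : Type*} [AddCommGroup V] [Module (ZMod 2) V] (x y z : V) :
    z ∈ Submodule.span (ZMod 2) {x, y} ↔ (z = 0 ∨ z = x ∨ z = y ∨ z = x + y) := by
  rw [Submodule.mem_span_pair]
  have h : ∀ a : ZMod 2, a = 0 ∨ a = 1 := by decide
  constructor
  · rintro ⟨a, b, rfl⟩
    rcases h a with rfl | rfl <;> rcases h b with rfl | rfl <;> simp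
  · rintro (rfl | rfl | rfl | rfl)
    · exact ⟨0, 0, by simp⟩
    · exact ⟨1, 0, by simp⟩
    · exact ⟨0, 1, by simp⟩
    · exact ⟨1, 1, by simp⟩

lemma mem_one {V : Type*} [AddCommGroup V] [Module (ZMod 2) V] (x z : V) :
    z ∈ Submodule.span (ZMod 2) {x} ↔ (z = 0 ∨ z = x) := by
  rw [← Set.pair_eq_singleton x, mem_pair]
  have : x + x = 0 := by
    rw [← two_smul (ZMod 2), show (2 : ZMod 2) = 0 from rfl, zero_smul]
  rw [this]; tauto

lemma finrank_pair {V : Type*} [AddCommGroup V] [Module (ZMod 2) V] (x y : V)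
    (hx : x ≠ 0) (hy : y ≠ 0) (hxy : y ≠ x) :
    finrank (ZMod 2) (Submodule.span (ZMod 2) {x, y}) = 2 := by
  have hl : LinearIndependent (ZMod 2) ![y, x] := by
    rw [LinearIndependent.pair_iff' hy]
    intro a
    have h : ∀ a : ZMod 2, a = 0 ∨ a = 1 := by decide
    rcases h a with rfl | rfl
    · simpa using hx.symm
    · simpa using hxy
  have := finrank_span_eq_card hl
  have hr : Set.range ![y, x] = {x, y} := by simp [Set.pair_comm]
  rw [hr] at this
  simpa using this

lemma exists_pair {V : Type*} [AddCommGroup V] [Module (ZMod 2) V]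
    [FiniteDimensional (ZMod 2) V] (W : Submodule (ZMod 2) V)
    (hW : finrank (ZMod 2) W = 2) (x : V) (hx : x ≠ 0) (hxW : x ∈ W) :
    ∃ z, z ≠ 0 ∧ z ≠ x ∧ W = Submodule.span (ZMod 2) {x, z} := by
  have : ¬ W ≤ Submodule.span (ZMod 2) {x} := by
    intro h
    have := Submodule.finrank_mono h
    rw [hW, finrank_span_singleton hx] at this
    omega
  obtain ⟨z, hz, hzx⟩ := SetLike.not_le_iff_exists.1 this
  rw [mem_one] at hzx
  push Not at hzx
  refine ⟨z, hzx.1, hzx.2, ?_⟩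
  symm
  apply Submodule.eq_of_le_of_finrank_eq
  · rw [Submodule.span_le]
    rintro w (rfl | rfl) <;> assumption
  · rw [hW, finrank_pair x z hx hzx.1 hzx.2]

abbrev ep : UU := ![0,0,0,1]
abbrev ea : UU := ![0,0,1,0]
abbrev eb : UU := ![0,1,0,0]

lemma g_ne : ∀ i, gx i ≠ 0 ∧ gy i ≠ 0 ∧ gy i ≠ gx i := by decide +kernel
lemma g_inj : ∀ i j, InSp (gx j) (gy j) (gx i) → InSp (gx j) (gy j) (gy i) → i = j := by
  decide +kernel
lemma g_meet1 : ∀ i, ∃ x, InSp (gx i) (gy i) x ∧ InSp ep ea x ∧ x ≠ 0 := by decide +kernel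
lemma g_meet2 : ∀ i, ∃ x, InSp (gx i) (gy i) x ∧ InSp ep eb x ∧ x ≠ 0 := by decide +kernel
lemma g_surj : ∀ x, InSp ep ea x → x ≠ 0 → ∀ y, InSp ep eb y → y ≠ 0 → ∀ z, z ≠ 0 → z ≠ x →
    InSp x z y → ∃ i, InSp (gx i) (gy i) x ∧ InSp (gx i) (gy i) z := by decide +kernel

lemma meet_iff {V : Type*} [AddCommGroup V] [Module (ZMod 2) V] (W L : Submodule (ZMod 2) V) :
    W ⊓ L ≠ ⊥ ↔ ∃ x, x ∈ W ∧ x ∈ L ∧ x ≠ 0 := by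
  rw [Submodule.ne_bot_iff]; simp [and_assoc]

lemma count_UU : Nat.card {W : Submodule (ZMod 2) UU //
      finrank (ZMod 2) W = 2 ∧ W ⊓ Submodule.span (ZMod 2) {ep, ea} ≠ ⊥ ∧
        W ⊓ Submodule.span (ZMod 2) {ep, eb} ≠ ⊥} = 11 := by
  have hfr : ∀ i, finrank (ZMod 2) (Submodule.span (ZMod 2) {gx i, gy i}) = 2 := fun i =>
    finrank_pair _ _ (g_ne i).1 (g_ne i).2.1 (g_ne i).2.2
  let f : Fin 11 → {W : Submodule (ZMod 2) UU //
      finrank (ZMod 2) W = 2 ∧ W ⊓ Submodule.span (ZMod 2) {ep, ea} ≠ ⊥ ∧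
        W ⊓ Submodule.span (ZMod 2) {ep, eb} ≠ ⊥} := fun i =>
    ⟨Submodule.span (ZMod 2) {gx i, gy i}, hfr i, by
      rw [meet_iff]; simp only [mem_pair]; exact g_meet1 i, by
      rw [meet_iff]; simp only [mem_pair]; exact g_meet2 i⟩
  have hf : Function.Bijective f := by
    constructor
    · intro i j h
      have h' : Submodule.span (ZMod 2) {gx i, gy i} = Submodule.span (ZMod 2) {gx j, gy j} :=
        congrArg Subtype.val h
      apply g_inj
      · apply (mem_pair _ _ _).1
        rw [← h']; exact Submodule.subset_span (by simp)
      · apply (mem_pair _ _ _).1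
        rw [← h']; exact Submodule.subset_span (by simp)
    · rintro ⟨W, hW, h1, h2⟩
      rw [meet_iff] at h1 h2
      obtain ⟨x, hxW, hx1, hx⟩ := h1
      obtain ⟨y, hyW, hy2, hy⟩ := h2
      obtain ⟨z, hz, hzx, hWz⟩ := exists_pair W hW x hx hxW
      rw [hWz] at hyW
      obtain ⟨i, hi1, hi2⟩ := g_surj x ((mem_pair _ _ _).1 hx1) hx y ((mem_pair _ _ _).1 hy2) hy
        z hz hzx ((mem_pair _ _ _).1 hyW)
      refine ⟨i, Subtype.ext ?_⟩
      symm
      apply Submodule.eq_of_le_of_finrank_eq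
      · change W ≤ Submodule.span (ZMod 2) {gx i, gy i}
        rw [hWz, Submodule.span_le]
        rintro w (rfl | rfl)
        · exact (mem_pair _ _ _).2 hi1
        · exact (mem_pair _ _ _).2 hi2
      · exact hW.trans (hfr i).symm
  rw [← Nat.card_eq_of_bijective f hf]; simp

/-- In a 4-dimensional vector space over `F_2`, if `L1 ≠ L2` are 2-dimensional
subspaces with `L1 ⊓ L2 ≠ ⊥`, the number of 2-dimensional subspaces meeting both
nontrivially (including `L1` and `L2`) is exactly 11. -/
theorem stmt_11 (V : Type*) [AddCommGroup V] [Module (ZMod 2) V]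
    [FiniteDimensional (ZMod 2) V] (hV : finrank (ZMod 2) V = 4)
    (L1 L2 : Submodule (ZMod 2) V)
    (hL1 : finrank (ZMod 2) L1 = 2) (hL2 : finrank (ZMod 2) L2 = 2)
    (hne : L1 ≠ L2) (h12 : L1 ⊓ L2 ≠ ⊥) :
    Nat.card {W : Submodule (ZMod 2) V //
      finrank (ZMod 2) W = 2 ∧ W ⊓ L1 ≠ ⊥ ∧ W ⊓ L2 ≠ ⊥} = 11 := by
  rw [meet_iff] at h12
  obtain ⟨p, hp1, hp2, hp⟩ := h12
  obtain ⟨a, ha, hap, hLa⟩ := exists_pair L1 hL1 p hp hp1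
  obtain ⟨b, hb, hbp, hLb⟩ := exists_pair L2 hL2 p hp hp2
  have hbL : b ∉ L1 := by
    intro hb1
    apply hne
    symm
    apply Submodule.eq_of_le_of_finrank_eq
    · rw [hLb, Submodule.span_le]
      rintro w (rfl | rfl) <;> assumption
    · rw [hL1, hL2]
  have l1 : LinearIndependent (ZMod 2) ![p] := by
    rw [linearIndependent_unique_iff]; simpa using hp
  have l2 : LinearIndependent (ZMod 2) ![a, p] := by
    refine linearIndependent_finCons.2 ⟨l1, ?_⟩
    simp [mem_one, ha, hap]
  have l3 : LinearIndependent (ZMod 2) ![b, a, p] := by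
    refine linearIndependent_finCons.2 ⟨l2, ?_⟩
    rw [hLa] at hbL
    simpa using hbL
  obtain ⟨c, hc⟩ : ∃ c, c ∉ Submodule.span (ZMod 2) (Set.range ![b, a, p]) := by
    by_contra! h
    have h1 := finrank_span_eq_card l3
    rw [(Submodule.eq_top_iff').2 h, finrank_top, hV] at h1
    simp at h1
  have l4 : LinearIndependent (ZMod 2) ![c, b, a, p] := linearIndependent_finCons.2 ⟨l3, hc⟩
  let B := basisOfLinearIndependentOfCardEqFinrank l4 (by simp [hV])
  have hB : ⇑B = ![c, b, a, p] := coe_basisOfLinearIndependentOfCardEqFinrank _ _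
  let e := B.equivFun
  have key : ∀ i, e (![c, b, a, p] i) = Pi.single i 1 := by
    intro i; rw [← hB]; ext j; simp [e, Pi.single_apply, Finsupp.single_apply, eq_comm]
  have kb : e b = eb := (key 1).trans (by decide)
  have ka : e a = ea := (key 2).trans (by decide)
  have kp : e p = ep := (key 3).trans (by decide)
  have m1 : L1.map (e : V →ₗ[ZMod 2] UU) = Submodule.span (ZMod 2) {ep, ea} := by
    rw [hLa, Submodule.map_span, Set.image_pair, ← kp, ← ka]; rfl
  have m2 : L2.map (e : V →ₗ[ZMod 2] UU) = Submodule.span (ZMod 2) {ep, eb} := by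
    rw [hLb, Submodule.map_span, Set.image_pair, ← kp, ← kb]; rfl
  rw [← count_UU, ← m1, ← m2]
  have hm : ∀ W L : Submodule (ZMod 2) V, W ⊓ L ≠ ⊥ ↔
      W.map (e : V →ₗ[ZMod 2] UU) ⊓ L.map (e : V →ₗ[ZMod 2] UU) ≠ ⊥ := by
    intro W L
    rw [← Submodule.map_inf _ e.injective, not_iff_not, Submodule.map_eq_bot_iff]
  refine Nat.card_congr ((Submodule.orderIsoMapComap e).toEquiv.subtypeEquiv fun W => ?_)
  have : (Submodule.orderIsoMapComap e).toEquiv W = W.map (e : V →ₗ[ZMod 2] UU) := rfl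
  rw [this, ← hm, ← hm, LinearEquiv.finrank_map_eq]
end

section
/- Suppose V = r ⊕ s with r and s both 2-dimensional subspaces, and let v ∈ V be a vector with v ∉ r ∪ s. Then there exist exactly 2 two-dimensional subspaces W of V such that v ∈ W, W ∩ r = {0}, and W ∩ s = {0}. -/
open Module

lemma aux_zmod : ∀ t : ZMod 2, t = 0 ∨ t = 1 := by decide

lemma aux_pair_s12 {V : Type*} [AddCommGroup V] [Module (ZMod 2) V]
    (p q : V) (hp : p ≠ 0) (hq : q ≠ 0) (hpq : p ≠ q) :
    finrank (ZMod 2) (Submodule.span (ZMod 2) {p, q}) = 2 := by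
  have hli : LinearIndependent (ZMod 2) ![p, q] := by
    rw [LinearIndependent.pair_iff' hp]
    intro t
    rcases aux_zmod t with rfl | rfl
    · simpa using hq.symm
    · simpa using hpq
  have := finrank_span_eq_card hli
  rw [Matrix.range_cons, Matrix.range_cons, Matrix.range_empty, Set.union_empty,
    Set.singleton_union] at this
  simpa using this

lemma aux_mem {V : Type*} [AddCommGroup V] [Module (ZMod 2) V]
    (p q x : V) (hx : x ∈ Submodule.span (ZMod 2) {p, q}) :
    x = 0 ∨ x = p ∨ x = q ∨ x = p + q := by
  rw [Submodule.mem_span_pair] at hx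
  obtain ⟨i, j, rfl⟩ := hx
  rcases aux_zmod i with rfl | rfl <;> rcases aux_zmod j with rfl | rfl <;> simp

lemma aux_basis_s12 {V : Type*} [AddCommGroup V] [Module (ZMod 2) V]
    [FiniteDimensional (ZMod 2) V] (U : Submodule (ZMod 2) V)
    (hU : finrank (ZMod 2) U = 2) (a : V) (ha : a ∈ U) (ha0 : a ≠ 0) :
    ∃ c ∈ U, c ≠ 0 ∧ c ≠ a ∧ ∀ x ∈ U, x = 0 ∨ x = a ∨ x = c ∨ x = a + c := by
  have h : ∃ c ∈ U, c ∉ Submodule.span (ZMod 2) {a} := by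
    by_contra! h
    have h1 : U ≤ Submodule.span (ZMod 2) {a} := h
    have := Submodule.finrank_mono h1
    rw [finrank_span_singleton ha0] at this
    omega
  obtain ⟨c, hc, hca⟩ := h
  have hc0 : c ≠ 0 := by rintro rfl; exact hca (zero_mem _)
  have hc1 : c ≠ a := by rintro rfl; exact hca (Submodule.mem_span_singleton_self _)
  refine ⟨c, hc, hc0, hc1, fun x hx => ?_⟩
  have hle : Submodule.span (ZMod 2) {a, c} ≤ U := by
    rw [Submodule.span_le]
    rintro y (rfl | rfl) <;> assumption
  have := Submodule.eq_of_le_of_finrank_eq hle (by rw [aux_pair_s12 a c ha0 hc0 hc1.symm, hU])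
  rw [← this] at hx
  exact aux_mem _ _ _ hx

lemma aux_disj_s12 {V : Type*} [AddCommGroup V] [Module (ZMod 2) V]
    (r s : Submodule (ZMod 2) V) (hinf : r ⊓ s = ⊥) (x y : V) (hx : x ∈ r) (hy : y ∈ s)
    (h : x + y ∈ r) : y = 0 := by
  have : y ∈ r ⊓ s := ⟨(Submodule.add_mem_iff_right r hx).1 h, hy⟩
  rw [hinf] at this
  simpa using this

lemma aux_ne {V : Type*} [AddCommGroup V] [Module (ZMod 2) V] {x y : V} (h : x + y = 0) :
    x = y := by
  rw [add_eq_zero_iff_eq_neg] at h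
  rwa [ZModModule.neg_eq_self] at h

lemma aux_half {V : Type*} [AddCommGroup V] [Module (ZMod 2) V]
    (r s : Submodule (ZMod 2) V) (hinf : r ⊓ s = ⊥) (a b c d : V)
    (ha : a ∈ r) (hb : b ∈ s) (hc : c ∈ r) (hd : d ∈ s)
    (hb0 : b ≠ 0) (hd0 : d ≠ 0) (hdb : d ≠ b) :
    Submodule.span (ZMod 2) {a + b, c + d} ⊓ r = ⊥ := by
  rw [eq_bot_iff]
  rintro x ⟨hx, hxr⟩
  replace hxr : x ∈ r := hxr
  rcases aux_mem _ _ _ hx with rfl | rfl | rfl | rfl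
  · simp
  · exact absurd (aux_disj_s12 r s hinf a b ha hb hxr) hb0
  · exact absurd (aux_disj_s12 r s hinf c d hc hd hxr) hd0
  · rw [add_add_add_comm] at hxr
    exact absurd (aux_ne (aux_disj_s12 r s hinf _ _ (add_mem ha hc) (add_mem hb hd) hxr)) hdb.symm

/-- In a 4-dimensional vector space over `F_2` with `V = r ⊕ s`, `r` and `s`
2-dimensional, and `v ∉ r ∪ s`, there exist exactly 2 two-dimensional subspaces `W`
with `v ∈ W`, `W ⊓ r = ⊥` and `W ⊓ s = ⊥`. -/
theorem stmt_12 (V : Type*) [AddCommGroup V] [Module (ZMod 2) V]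
    [FiniteDimensional (ZMod 2) V] (hV : finrank (ZMod 2) V = 4)
    (r s : Submodule (ZMod 2) V)
    (hr : finrank (ZMod 2) r = 2) (hs : finrank (ZMod 2) s = 2)
    (hinf : r ⊓ s = ⊥) (hsup : r ⊔ s = ⊤)
    (v : V) (hv : v ∉ (r : Set V) ∪ (s : Set V)) :
    Nat.card {W : Submodule (ZMod 2) V //
      v ∈ W ∧ finrank (ZMod 2) W = 2 ∧ W ⊓ r = ⊥ ∧ W ⊓ s = ⊥} = 2 := by
  have hdec : ∀ x : V, ∃ y ∈ r, ∃ z ∈ s, y + z = x := fun x =>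
    Submodule.mem_sup.1 (hsup ▸ Submodule.mem_top)
  have hinf' : s ⊓ r = ⊥ := by rw [inf_comm, hinf]
  obtain ⟨a, ha, b, hb, rfl⟩ := hdec v
  have hv0 : a + b ∉ r ∧ a + b ∉ s := by simpa using hv
  have ha0 : a ≠ 0 := by rintro rfl; exact hv0.2 (by simpa using hb)
  have hb0 : b ≠ 0 := by rintro rfl; exact hv0.1 (by simpa using ha)
  have hab : a + b ≠ 0 := fun h => hv0.1 (h ▸ zero_mem _)
  obtain ⟨c, hc, hc0, hca, hr4⟩ := aux_basis_s12 r hr a ha ha0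
  obtain ⟨d, hd, hd0, hdb, hs4⟩ := aux_basis_s12 s hs b hb hb0
  have key : ∀ e ∈ s, e ≠ 0 → e ≠ b →
      finrank (ZMod 2) (Submodule.span (ZMod 2) {a + b, c + e}) = 2 ∧
      Submodule.span (ZMod 2) {a + b, c + e} ⊓ r = ⊥ ∧
      Submodule.span (ZMod 2) {a + b, c + e} ⊓ s = ⊥ := by
    intro e he he0 heb
    refine ⟨aux_pair_s12 _ _ hab ?_ ?_, aux_half r s hinf a b c e ha hb hc he hb0 he0 heb, ?_⟩
    · intro h
      exact he0 (aux_disj_s12 r s hinf c e hc he (h ▸ zero_mem _))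
    · intro h
      have h2 : (a + b) + (c + e) = 0 := by rw [h, ZModModule.add_self]
      rw [add_add_add_comm] at h2
      exact heb.symm (aux_ne (aux_disj_s12 r s hinf _ _ (add_mem ha hc) (add_mem hb he)
        (h2 ▸ zero_mem _)))
    · rw [add_comm a b, add_comm c e]
      exact aux_half s r hinf' b a e c hb ha he hc ha0 hc0 hca
  have hbd0 : b + d ≠ 0 := fun h => hdb (aux_ne h).symm
  have hbdb : b + d ≠ b := by simpa using hd0
  have k1 := key d hd hd0 hdb
  have k2 := key (b + d) (add_mem hb hd) hbd0 hbdb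
  have hset : {W : Submodule (ZMod 2) V |
      a + b ∈ W ∧ finrank (ZMod 2) W = 2 ∧ W ⊓ r = ⊥ ∧ W ⊓ s = ⊥} =
      {Submodule.span (ZMod 2) {a + b, c + d}, Submodule.span (ZMod 2) {a + b, c + (b + d)}} := by
    ext W
    simp only [Set.mem_ofPred_eq, Set.mem_insert_iff, Set.mem_singleton_iff]
    constructor
    · rintro ⟨hvW, hW, hWr, hWs⟩
      have hr0 : ∀ x ∈ W, x ∈ r → x = 0 := fun x h1 h2 => by
        have : x ∈ W ⊓ r := ⟨h1, h2⟩
        simpa [hWr] using this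
      have hs0 : ∀ x ∈ W, x ∈ s → x = 0 := fun x h1 h2 => by
        have : x ∈ W ⊓ s := ⟨h1, h2⟩
        simpa [hWs] using this
      have hfin : ∀ p, p ∈ W → finrank (ZMod 2) (Submodule.span (ZMod 2) {a + b, p}) = 2 →
          W = Submodule.span (ZMod 2) {a + b, p} := by
        intro p hp h2
        refine (Submodule.eq_of_le_of_finrank_eq ?_ (by rw [h2, hW])).symm
        rw [Submodule.span_le]
        rintro y (rfl | rfl) <;> assumption
      obtain ⟨w, hw, hw0, hwv, -⟩ := aux_basis_s12 W hW _ hvW hab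
      obtain ⟨x, hx, y, hy, rfl⟩ := hdec w
      have hsum := add_mem hvW hw
      have hsum0 : (a + b) + (x + y) ≠ 0 := fun h => hwv (aux_ne h).symm
      have haa := ZModModule.add_self a
      have hbb := ZModModule.add_self b
      rw [add_add_add_comm] at hsum hsum0
      rcases hr4 x hx with rfl | rfl | rfl | rfl
      · exact absurd (hs0 _ hw (by simpa using hy)) hw0
      · rw [haa, zero_add] at hsum hsum0
        exact absurd (hs0 _ hsum (add_mem hb hy)) hsum0
      all_goals
        rcases hs4 y hy with rfl | rfl | rfl | rfl
        · exact absurd (hr0 _ hw (by simpa using hx)) hw0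
        · rw [hbb, add_zero] at hsum hsum0
          exact absurd (hr0 _ hsum (add_mem ha hx)) hsum0
      · exact Or.inl (hfin _ hw k1.1)
      · exact Or.inr (hfin _ hw k2.1)
      · rw [← add_assoc a a, haa, zero_add] at hsum
        exact Or.inr (hfin _ hsum k2.1)
      · rw [← add_assoc a a, haa, zero_add, ← add_assoc b b, hbb, zero_add] at hsum
        exact Or.inl (hfin _ hsum k1.1)
    · rintro (rfl | rfl)
      · exact ⟨Submodule.subset_span (by simp), k1⟩
      · exact ⟨Submodule.subset_span (by simp), k2⟩
  have hne : Submodule.span (ZMod 2) {a + b, c + d} ≠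
      Submodule.span (ZMod 2) {a + b, c + (b + d)} := by
    intro h
    have h1 : c + d ∈ Submodule.span (ZMod 2) {a + b, c + d} := Submodule.subset_span (by simp)
    have h2 : c + (b + d) ∈ Submodule.span (ZMod 2) {a + b, c + d} := by
      rw [h]; exact Submodule.subset_span (by simp)
    have h3 := sub_mem h2 h1
    have h4 : c + (b + d) - (c + d) = b := by abel
    rw [h4] at h3
    have h5 : b ∈ Submodule.span (ZMod 2) {a + b, c + d} ⊓ s := ⟨h3, hb⟩
    rw [k1.2.2] at h5
    exact hb0 (by simpa using h5)
  change Nat.card ↥{W : Submodule (ZMod 2) V |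
      a + b ∈ W ∧ finrank (ZMod 2) W = 2 ∧ W ⊓ r = ⊥ ∧ W ⊓ s = ⊥} = 2
  rw [Nat.card_coe_set_eq, hset, Set.ncard_pair hne]
end

section
/- Let λ ∈ ℂ with λ ≠ 1 and λ·Γ ⊆ Γ. Then the number of elements z of the quotient group ℂ/Γ satisfying λ·z = z (i.e., the number of cosets w + Γ with (λ−1)·w ∈ Γ) is finite and equal to |λ−1|^2, the complex norm of λ−1. -/
open Module in
theorem relIndex_eq_abs_det_real {E : Type*} [AddCommGroup E] [Module ℝ E]
    (L₁ L₂ : AddSubgroup E) (H : L₁ ≤ L₂) {ι : Type*} [DecidableEq ι] [Fintype ι]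
    (b₁ b₂ : Basis ι ℝ E) (h₁ : L₁ = .closure (Set.range b₁)) (h₂ : L₂ = .closure (Set.range b₂)) :
    (L₁.relIndex L₂ : ℝ) = |b₂.det b₁| := by
  rw [AddSubgroup.relIndex_eq_natAbs_det L₁ L₂ H (b₁.addSubgroupOfClosure L₁ h₁)
    (b₂.addSubgroupOfClosure L₂ h₂), Nat.cast_natAbs, Int.cast_abs]
  change |algebraMap ℤ ℝ _| = _
  rw [Basis.det_apply, Basis.det_apply, RingHom.map_det]
  congr 2
  ext i j
  rw [RingHom.mapMatrix_apply, Matrix.map_apply, Basis.toMatrix_apply, Basis.toMatrix_apply]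
  have := b₂.addSubgroupOfClosure_repr_apply L₂ h₂ ⟨b₁ j, H (h₁ ▸ AddSubgroup.subset_closure ⟨j, rfl⟩)⟩ i
  simp only [Basis.addSubgroupOfClosure_apply]
  exact this

/-- Let `Γ ⊂ ℂ` be a lattice, `λ ≠ 1` with `λΓ ⊆ Γ`. The set of `λ`-fixed points of
`ℂ/Γ`, i.e. cosets `w + Γ` with `(λ−1)w ∈ Γ`, is finite of cardinality `|λ−1|²`. -/
theorem stmt_17 (ω1 ω2 : ℂ) (hind : LinearIndependent ℝ ![ω1, ω2])
    (Γ : AddSubgroup ℂ) (hΓ : Γ = AddSubgroup.closure {ω1, ω2})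
    (lam : ℂ) (hlam : lam ≠ 1) (hmul : ∀ z ∈ Γ, lam * z ∈ Γ) :
    {z : ℂ ⧸ Γ | ∃ w : ℂ, (w : ℂ ⧸ Γ) = z ∧ (lam - 1) * w ∈ Γ}.Finite ∧
    ({z : ℂ ⧸ Γ | ∃ w : ℂ, (w : ℂ ⧸ Γ) = z ∧ (lam - 1) * w ∈ Γ}.ncard : ℝ)
      = Complex.normSq (lam - 1) := by
  have hμ : lam - 1 ≠ 0 := sub_ne_zero.mpr hlam
  have hmul' : ∀ z ∈ Γ, (lam - 1) * z ∈ Γ := fun z hz => by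
    rw [sub_mul, one_mul]; exact Γ.sub_mem (hmul z hz) hz
  generalize lam - 1 = μ at *
  let f : ℂ →+ ℂ := AddMonoidHom.mulLeft μ
  have hf : Function.Injective f := fun a b h => mul_left_cancel₀ hμ h
  have hfs : Function.Surjective f := fun a => ⟨μ⁻¹ * a, mul_inv_cancel_left₀ hμ a⟩
  have hset : {z : ℂ ⧸ Γ | ∃ w : ℂ, (w : ℂ ⧸ Γ) = z ∧ μ * w ∈ Γ} =
      (((Γ.comap f).map (QuotientAddGroup.mk' Γ) : AddSubgroup (ℂ ⧸ Γ)) : Set (ℂ ⧸ Γ)) := by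
    ext z
    constructor
    · rintro ⟨w, h1, h2⟩
      exact ⟨w, h2, h1⟩
    · rintro ⟨w, h2, h1⟩
      exact ⟨w, h1, h2⟩
  have hcard : Nat.card ((Γ.comap f).map (QuotientAddGroup.mk' Γ)) =
      (Γ.map f).relIndex Γ := by
    rw [← AddSubgroup.relIndex_ker, QuotientAddGroup.ker_mk',
      ← AddSubgroup.relIndex_map_map_of_injective _ _ hf,
      AddSubgroup.map_comap_eq_self_of_surjective hfs]
  let b : Module.Basis (Fin 2) ℝ ℂ := basisOfLinearIndependentOfCardEqFinrank hind (by simp)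
  have hb : (b : Fin 2 → ℂ) = ![ω1, ω2] := by simp [b]
  let e : ℂ ≃ₗ[ℝ] ℂ := (LinearEquiv.smulOfNeZero ℂ ℂ μ hμ).restrictScalars ℝ
  have he : ∀ x, e x = μ * x := fun x => rfl
  have h2 : Γ = .closure (Set.range b) := by rw [hb, hΓ]; simp [Set.pair_comm]
  have h1 : Γ.map f = .closure (Set.range (b.map e)) := by
    rw [h2, AddMonoidHom.map_closure, ← Set.range_comp]
    rfl
  have hkey := relIndex_eq_abs_det_real (Γ.map f) Γ
    (by rintro _ ⟨x, hx, rfl⟩; exact hmul' x hx) (b.map e) b h1 h2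
  have hdet : b.det (b.map e) = Complex.normSq μ := by
    have h3 : (⇑(b.map e)) = (Algebra.lmul ℝ ℂ μ) ∘ b := rfl
    rw [h3, Module.Basis.det_comp_basis, ← Algebra.norm_complex_apply]
    simp [Algebra.norm_apply]
  rw [hdet, abs_of_nonneg (Complex.normSq_nonneg _), ← hcard] at hkey
  rw [hset]
  refine ⟨?_, ?_⟩
  · apply Set.finite_coe_iff.mp
    apply Nat.finite_of_card_ne_zero
    intro h0
    have h0' : Nat.card ((Γ.comap f).map (QuotientAddGroup.mk' Γ)) = 0 := h0
    rw [h0'] at hkey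
    exact hμ (Complex.normSq_eq_zero.mp (by rw [← hkey]; simp))
  · rw [← hkey]; rfl
end

section
/- Assume that every μ ∈ ℂ with μ·Γ ⊆ Γ is an integer. Let V be a 1-dimensional complex linear subspace of ℂ × ℂ such that V ∩ (Γ × Γ) contains two elements that are linearly independent over ℝ. Then there exist coprime integers a, b such that V = ℂ·(a, b), the complex line spanned by the vector (a, b). -/
theorem aux_span_s18 (V : Submodule ℂ (ℂ × ℂ)) (hdim : Module.finrank ℂ V = 1)
    (w : ℂ × ℂ) (hw : w ∈ V) (h0 : w ≠ 0) : V = Submodule.span ℂ {w} := by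
  haveI : FiniteDimensional ℂ V := Module.finite_of_finrank_eq_succ hdim
  symm
  apply Submodule.eq_of_le_of_finrank_eq
  · simpa using hw
  · rw [hdim, finrank_span_singleton h0]

/-- Let `Γ ⊂ ℂ` be a lattice with no complex multiplication (every `μ` with `μΓ ⊆ Γ`
is an integer). If `V ⊂ ℂ × ℂ` is a 1-dimensional complex subspace such that
`V ∩ (Γ × Γ)` contains two elements that are `ℝ`-linearly independent, then
`V = ℂ·(a, b)` for some coprime integers `a`, `b`. -/
theorem stmt_18 (ω1 ω2 : ℂ) (hind : LinearIndependent ℝ ![ω1, ω2])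
    (Γ : AddSubgroup ℂ) (hΓ : Γ = AddSubgroup.closure {ω1, ω2})
    (hnoCM : ∀ μ : ℂ, (∀ z ∈ Γ, μ * z ∈ Γ) → ∃ n : ℤ, μ = (n : ℂ))
    (V : Submodule ℂ (ℂ × ℂ)) (hdim : Module.finrank ℂ V = 1)
    (hmeet : ∃ u v : ℂ × ℂ, u ∈ V ∧ v ∈ V ∧ u.1 ∈ Γ ∧ u.2 ∈ Γ ∧ v.1 ∈ Γ ∧ v.2 ∈ Γ ∧
      LinearIndependent ℝ ![u, v]) :
    ∃ a b : ℤ, IsCoprime a b ∧ V = Submodule.span ℂ {(((a : ℂ), (b : ℂ)) : ℂ × ℂ)} := by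
  obtain ⟨u, v, hu, hv, hu1, hu2, hv1, hv2, hli⟩ := hmeet
  have hu0 : u ≠ 0 := hli.ne_zero 0
  rw [LinearIndependent.pair_iff] at hli
  by_cases h1 : u.1 = 0
  · have h2 : u.2 ≠ 0 := fun h => hu0 (Prod.ext h1 h)
    refine ⟨0, 1, isCoprime_one_right, aux_span_s18 V hdim _ ?_ (by simp)⟩
    have := V.smul_mem (u.2)⁻¹ hu
    convert this using 1
    ext <;> simp [h1, h2]
  have hV := aux_span_s18 V hdim u hu hu0
  obtain ⟨l, hl⟩ : ∃ l : ℂ, u.2 = l * u.1 := ⟨u.2 / u.1, by field_simp⟩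
  have hl' : v.2 = l * v.1 := by
    rw [hV, Submodule.mem_span_singleton] at hv
    obtain ⟨t, rfl⟩ := hv
    simp [hl]; ring
  have hu1' := hu1
  have hv1' := hv1
  rw [hΓ, AddSubgroup.mem_closure_pair] at hu1' hv1'
  obtain ⟨a, b, hab⟩ := hu1'
  obtain ⟨c, d, hcd⟩ := hv1'
  simp only [zsmul_eq_mul] at hab hcd
  have e1 : ((a * d - b * c : ℤ) : ℂ) * ω1 = d * u.1 - b * v.1 := by
    rw [← hab, ← hcd]; push_cast; ring
  have e2 : ((a * d - b * c : ℤ) : ℂ) * ω2 = a * v.1 - c * u.1 := by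
    rw [← hab, ← hcd]; push_cast; ring
  generalize hD : a * d - b * c = D at e1 e2
  have hD0 : D ≠ 0 := by
    rintro rfl
    have k1 := hli d (-b) (by
      ext
      · simp; linear_combination -e1
      · simp [hl, hl']; linear_combination -l * e1)
    have k2 := hli (-c) a (by
      ext
      · simp; linear_combination -e2
      · simp [hl, hl']; linear_combination -l * e2)
    have ha : a = 0 := by exact_mod_cast k2.2
    have hb : b = 0 := by
      have := k1.2
      simpa using this
    apply h1
    rw [← hab, ha, hb]; simp
  have m (x y : ℂ) (hx : x ∈ Γ) (hy : y ∈ Γ) (p q : ℤ) : (p:ℂ) * x - q * y ∈ Γ := by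
    have := Γ.sub_mem (Γ.zsmul_mem hx p) (Γ.zsmul_mem hy q)
    simpa using this
  have f1 : l * D * ω1 ∈ Γ := by
    have := m _ _ hu2 hv2 d b
    convert this using 1
    rw [hl, hl']; linear_combination l * e1
  have f2 : l * D * ω2 ∈ Γ := by
    have := m _ _ hv2 hu2 a c
    convert this using 1
    rw [hl, hl']; linear_combination l * e2
  obtain ⟨n, hn⟩ := hnoCM (l * D) (by
    intro z hz
    rw [hΓ, AddSubgroup.mem_closure_pair] at hz
    obtain ⟨p, q, rfl⟩ := hz
    have := Γ.add_mem (Γ.zsmul_mem f1 p) (Γ.zsmul_mem f2 q)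
    convert this using 1
    simp only [zsmul_eq_mul]; ring)
  have hg : 0 < Int.gcd D n := Int.gcd_pos_of_ne_zero_left _ hD0
  obtain ⟨a', b', hco, hDa, hnb⟩ := Int.exists_gcd_one hg
  generalize ((Int.gcd D n : ℕ) : ℤ) = g at hDa hnb
  have ha' : (a' : ℂ) ≠ 0 := by
    intro h
    have : a' = 0 := by exact_mod_cast h
    simp [this] at hDa
    exact hD0 hDa
  have hg0 : (g : ℂ) ≠ 0 := by
    intro h
    have : g = 0 := by exact_mod_cast h
    simp [this] at hDa
    exact hD0 hDa
  have hb' : (b' : ℂ) = l * a' := by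
    rw [hDa, hnb] at hn
    push_cast at hn
    apply mul_right_cancel₀ hg0
    linear_combination -hn
  refine ⟨a', b', Int.isCoprime_iff_gcd_eq_one.2 hco, aux_span_s18 V hdim _ ?_ ?_⟩
  · have := V.smul_mem ((a' : ℂ) / u.1) hu
    convert this using 1
    ext
    · simp [h1]
    · simp [hl, hb']; field_simp
  · intro h
    exact ha' (congrArg Prod.fst h)
end
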